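/- arXiv:1303.6156 — 2 statements merged into one kernel-verified Lean document; each statement's English description precedes it below -/
import Mathlib

section
/- Let ε₀ > 0, β ∈ ℝ∖{0}. Suppose Q₀ and Q₁ are real analytic real-valued functions on Δ_{ε₀} with Q₀(0) = 0, and a₁, a₂ are holomorphic functions on Δ_{ε₀} with a₁(0) = a₂(0) = 0 and a₁ not identically zero, satisfying on Δ_{ε₀}: (a) Re[ 2iβ z (Q₀)_z(z) + i a₁(z)(1 + Q₀(z)²) ] ≡ 0; (b) Re[ i (1 + Q₀(z)²) a₂(z) − i Q₁(z) a₁(z) ] ≡ 0; (c) Re[ iβ z (Q₁)_z(z) + (Q₁(z)/i)(i − Q₀(z)) a₁(z) + (1/2 + Q₀(z)/(2i))·( −Q₁(z) a₁(z) + (i − Q₀(z))² a₂(z) ) ] ≡ 0. Then Q₁(z) ≡ Q₁(0)(1 + Q₀(z)²) and a₂(z) ≡ Q₁(0) a₁(z) on Δ_{ε₀}. -/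
open Filter Set Metric Complex

/-- The Wirtinger derivative `∂u/∂z = (u_x - i u_y)/2` of a real-valued function on `ℂ`. -/
noncomputable def wDeriv (u : ℂ → ℝ) (z : ℂ) : ℂ :=
  (((fderiv ℝ u z) 1 : ℝ) - Complex.I * ((fderiv ℝ u z) Complex.I : ℝ)) / 2

/-!
Put `q = Q₁ / (1 + Q₀²)`. Equation (b) says that `a₂ - q a₁` is real, and with (a) the remaining
equation (c) becomes `β ∂q/∂θ = a₂ - q a₁`, an ordinary differential equation along each circle
`|z| = r`. Since `a₁` and `a₂` vanish at `0`, the angular primitives that arise in variation of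
constants are holomorphic, so the restriction of `q` to the circle extends to a holomorphic function
on the disc that solves the same equation. It is real on the circle, hence equal to a constant `k`,
and the equation gives `a₂ = k a₁`. As `a₁` is not identically zero, `k` does not depend on the
circle, and by continuity `k = q(0) = Q₁(0)`.
-/

open Bornology Topology

section MaximumPrinciple

theorem im_le_of_forall_mem_frontier_im_le {E : Type*} [NormedAddCommGroup E] [NormedSpace ℂ E]
    [Nontrivial E] {U : Set E} (hU : IsBounded U) {f : E → ℂ} (hf : DiffContOnCl ℂ f U) {C : ℝ}
    (hC : ∀ z ∈ frontier U, (f z).im ≤ C) {z : E} (hz : z ∈ closure U) : (f z).im ≤ C := by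
  have norm_exp_neg_I_mul (w : ℂ) : ‖exp (-I * w)‖ = Real.exp w.im := by simp [norm_exp]
  have hexp : DiffContOnCl ℂ (fun w => exp (-I * f w)) U :=
    differentiable_exp.comp_diffContOnCl (hf.const_smul (-I))
  have hle := norm_le_of_forall_mem_frontier_norm_le hU hexp (C := Real.exp C)
    (fun w hw => by simpa only [norm_exp_neg_I_mul, Real.exp_le_exp] using hC w hw) hz
  simpa only [norm_exp_neg_I_mul, Real.exp_le_exp] using hle

theorem exists_eqOn_closure_ofReal_of_frontier_im_eq_zero {U : Set ℂ} (hU : IsBounded U)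
    (hUo : IsOpen U) (hUc : IsConnected U) {f : ℂ → ℂ} (hf : DiffContOnCl ℂ f U)
    (hreal : ∀ z ∈ frontier U, (f z).im = 0) :
    ∃ k : ℝ, EqOn f (fun _ => (k : ℂ)) (closure U) := by
  have him (z : ℂ) (hz : z ∈ U) : (f z).im = 0 := by
    have hle := im_le_of_forall_mem_frontier_im_le hU hf (fun w hw => (hreal w hw).le)
      (subset_closure hz)
    have hge := im_le_of_forall_mem_frontier_im_le hU hf.neg (C := 0)
      (fun w hw => by simp [hreal w hw]) (subset_closure hz)
    exact hle.antisymm (by simpa using hge)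
  obtain ⟨k, hk⟩ := (hf.differentiableOn.analyticOnNhd hUo).eq_const_add_im_mul_I_of_re_eq_const
    him hUo hUc
  have hkU : EqOn f (fun _ => (k : ℂ)) U := fun z hz => by simpa using hk z hz
  exact ⟨k, hkU.of_subset_closure hf.continuousOn continuousOn_const subset_closure subset_rfl⟩

end MaximumPrinciple

section AngularDeriv

/-- The angular derivative `∂u/∂θ` in polar coordinates `z = r * exp (θ * I)`, i.e. the derivative
along the vector field `z * I` generating the rotations about `0`. -/
noncomputable def angularDeriv {E : Type*} [NormedAddCommGroup E] [NormedSpace ℝ E] (u : ℂ → E)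
    (z : ℂ) : E :=
  fderiv ℝ u z (z * I)

theorem hasDerivAt_comp_circleMap {E : Type*} [NormedAddCommGroup E] [NormedSpace ℝ E] {u : ℂ → E}
    {r t : ℝ} (hu : DifferentiableAt ℝ u (circleMap 0 r t)) :
    HasDerivAt (fun s => u (circleMap 0 r s)) (angularDeriv u (circleMap 0 r t)) t :=
  hu.hasFDerivAt.comp_hasDerivAt t (hasDerivAt_circleMap 0 r t)

theorem angularDeriv_mul_one_add_sq {f g : ℂ → ℝ} {z : ℂ} (hf : DifferentiableAt ℝ f z)
    (hg : DifferentiableAt ℝ g z) :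
    angularDeriv (fun w => g w * (1 + f w ^ 2)) z
      = (1 + f z ^ 2) * angularDeriv g z + 2 * f z * g z * angularDeriv f z := by
  have hmul : HasFDerivAt (fun w => g w * (1 + f w ^ 2)) _ z :=
    hg.hasFDerivAt.mul ((hf.hasFDerivAt.pow 2).const_add 1)
  rw [angularDeriv, hmul.fderiv]
  simp only [angularDeriv, Nat.add_one_sub_one, pow_one, nsmul_eq_mul, Nat.cast_ofNat, add_apply,
    smul_apply, smul_eq_mul]
  ring

theorem re_I_mul_mul_wDeriv (u : ℂ → ℝ) (z : ℂ) :
    (I * z * wDeriv u z).re = angularDeriv u z / 2 := by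
  have hrot : z * I = (-z.im) • (1 : ℂ) + z.re • I := by apply Complex.ext <;> simp
  rw [angularDeriv, hrot, map_add, map_smul, map_smul]
  simp only [wDeriv, smul_eq_mul, mul_re, mul_im, div_ofNat_re, div_ofNat_im, sub_re, sub_im,
    ofReal_re, ofReal_im, I_re, I_im]
  ring

end AngularDeriv

section AngularODE

variable {R r : ℝ} {a b : ℂ → ℂ}

theorem exists_differentiableOn_deriv_mul_I_eq (ha : DifferentiableOn ℂ a (ball 0 R))
    (ha0 : a 0 = 0) :
    ∃ A : ℂ → ℂ, DifferentiableOn ℂ A (ball 0 R) ∧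
      ∀ z ∈ ball (0 : ℂ) R, deriv A z * (z * I) = a z := by
  rcases le_or_gt R 0 with hR | hR
  · exact ⟨0, by simp [ball_eq_empty.2 hR]⟩
  have hdslope : DifferentiableOn ℂ (dslope a 0) (ball 0 R) :=
    (differentiableOn_dslope (ball_mem_nhds 0 hR)).2 ha
  obtain ⟨A, hA⟩ := (hdslope.const_mul (-I)).isExactOn_ball
  refine ⟨A, fun z hz => (hA z hz).differentiableAt.differentiableWithinAt, fun z hz => ?_⟩
  have hslope : z * dslope a 0 z = a z := by simpa [ha0] using sub_smul_dslope a 0 z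
  rw [(hA z hz).deriv]
  linear_combination hslope - z * dslope a 0 z * I_sq

theorem exists_holomorphic_eq_on_circle (hr : |r| < R)
    (ha : DifferentiableOn ℂ a (ball 0 R)) (hb : DifferentiableOn ℂ b (ball 0 R))
    (ha0 : a 0 = 0) (hb0 : b 0 = 0) {u : ℝ → ℂ}
    (hu : ∀ t, HasDerivAt u (b (circleMap 0 r t) - u t * a (circleMap 0 r t)) t) :
    ∃ F : ℂ → ℂ, DifferentiableOn ℂ F (ball 0 R) ∧
      (∀ z ∈ ball (0 : ℂ) R, deriv F z * (z * I) = b z - F z * a z) ∧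
      ∀ t, F (circleMap 0 r t) = u t := by
  obtain ⟨A, hA, hA'⟩ := exists_differentiableOn_deriv_mul_I_eq ha ha0
  obtain ⟨G, hG, hG'⟩ := exists_differentiableOn_deriv_mul_I_eq (hA.cexp.fun_mul hb) (by simp [hb0])
  have hasDerivAt_of_mem {f : ℂ → ℂ} (hf : DifferentiableOn ℂ f (ball 0 R)) {z : ℂ}
      (hz : z ∈ ball 0 R) : HasDerivAt f (deriv f z) z :=
    (hf.differentiableAt (isOpen_ball.mem_nhds hz)).hasDerivAt
  have hcircle (t : ℝ) : circleMap 0 r t ∈ ball (0 : ℂ) R := by simpa using hr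
  obtain ⟨c, hc⟩ : ∃ c, ∀ t, u t * exp (A (circleMap 0 r t)) - G (circleMap 0 r t) = c := by
    have hconst (t : ℝ) : HasDerivAt
        (fun s => u s * exp (A (circleMap 0 r s)) - G (circleMap 0 r s)) 0 t := by
      have hγ := hasDerivAt_circleMap 0 r t
      have hAγ := (hasDerivAt_of_mem hA (hcircle t)).comp t hγ
      have hGγ := (hasDerivAt_of_mem hG (hcircle t)).comp t hγ
      rw [hA' _ (hcircle t)] at hAγ
      rw [hG' _ (hcircle t)] at hGγ
      refine (((hu t).mul hAγ.cexp).sub hGγ).congr_deriv ?_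
      simp only [Function.comp_apply]
      ring
    exact ⟨_, fun t => is_const_of_deriv_eq_zero (fun s => (hconst s).differentiableAt)
      (fun s => (hconst s).deriv) t 0⟩
  have hexp (z : ℂ) : exp (-A z) * exp (A z) = 1 := by rw [← exp_add, neg_add_cancel, exp_zero]
  refine ⟨fun z => exp (-A z) * (G z + c), hA.neg.cexp.mul (hG.add_const c), fun z hz => ?_,
    fun t => ?_⟩
  · have hF := (hasDerivAt_of_mem hA hz).fun_neg.cexp.fun_mul
      ((hasDerivAt_of_mem hG hz).add_const c)
    rw [hF.deriv]
    linear_combination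
      -exp (-A z) * (G z + c) * hA' z hz + exp (-A z) * hG' z hz + b z * hexp z
  · linear_combination -exp (-A (circleMap 0 r t)) * hc t + u t * hexp (circleMap 0 r t)

variable {q : ℂ → ℝ}

theorem exists_const_on_circle_of_angular_ode (hr : 0 < r) (hrR : r < R)
    (ha : DifferentiableOn ℂ a (ball 0 R)) (hb : DifferentiableOn ℂ b (ball 0 R))
    (ha0 : a 0 = 0) (hb0 : b 0 = 0) (hq : ∀ z ∈ sphere (0 : ℂ) r, DifferentiableAt ℝ q z)
    (hode : ∀ z ∈ sphere (0 : ℂ) r, ((angularDeriv q z : ℝ) : ℂ) = b z - q z * a z) :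
    ∃ k : ℝ, (∀ z ∈ sphere (0 : ℂ) r, q z = k) ∧ ∀ z ∈ ball (0 : ℂ) r, b z = k * a z := by
  have hcircle (t : ℝ) := circleMap_mem_sphere 0 hr.le t
  obtain ⟨F, hF, hFode, hFq⟩ := exists_holomorphic_eq_on_circle
    (u := fun t => (q (circleMap 0 r t) : ℂ)) ((abs_of_pos hr).trans_lt hrR) ha hb ha0 hb0
    fun t => hode _ (hcircle t) ▸ (hasDerivAt_comp_circleMap (hq _ (hcircle t))).ofReal_comp
  have hFsphere (z : ℂ) (hz : z ∈ sphere 0 r) : F z = q z := by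
    have hz_eq : circleMap 0 r z.arg = z := by
      rw [circleMap_zero, ← mem_sphere_zero_iff_norm.1 hz, norm_mul_exp_arg_mul_I]
    simpa only [hz_eq] using hFq z.arg
  obtain ⟨k, hk⟩ := exists_eqOn_closure_ofReal_of_frontier_im_eq_zero isBounded_ball isOpen_ball
    (isConnected_ball hr) (hF.diffContOnCl_ball (closedBall_subset_ball hrR))
    fun z hz => by rw [hFsphere z (frontier_ball_subset_sphere hz), ofReal_im]
  rw [closure_ball _ hr.ne'] at hk
  refine ⟨k, fun z hz => ?_, fun z hz => ?_⟩
  · have hqk : (q z : ℂ) = k := (hFsphere z hz).symm.trans (hk (sphere_subset_closedBall hz))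
    exact_mod_cast hqk
  · have hderiv : deriv F z = 0 :=
      ((hk.mono ball_subset_closedBall).deriv isOpen_ball hz).trans (deriv_const z (k : ℂ))
    have hz_ode := hFode z (ball_subset_ball hrR.le hz)
    rw [hderiv, zero_mul, hk (ball_subset_closedBall hz)] at hz_ode
    exact sub_eq_zero.1 hz_ode.symm

theorem exists_mem_ball_ne_zero {f : ℂ → ℂ} {c : ℂ} (hr : 0 < r)
    (hf : DifferentiableOn ℂ f (ball c R)) (hne : ∃ z ∈ ball c R, f z ≠ 0) :
    ∃ z ∈ ball c r, f z ≠ 0 := by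
  by_contra! hzero
  obtain ⟨w, hw, hfw⟩ := hne
  exact hfw <| (hf.analyticOnNhd isOpen_ball).eqOn_zero_of_preconnected_of_eventuallyEq_zero
    isPreconnected_ball (mem_ball_self (pos_of_mem_ball hw))
    (eventually_of_mem (ball_mem_nhds c hr) hzero) hw

theorem exists_const_on_punctured_ball_of_angular_ode
    (ha : DifferentiableOn ℂ a (ball 0 R)) (hb : DifferentiableOn ℂ b (ball 0 R))
    (ha0 : a 0 = 0) (hb0 : b 0 = 0) (hane : ∃ z ∈ ball (0 : ℂ) R, a z ≠ 0)
    (hq : ∀ z ∈ ball (0 : ℂ) R, z ≠ 0 → DifferentiableAt ℝ q z)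
    (hode : ∀ z ∈ ball (0 : ℂ) R, z ≠ 0 → ((angularDeriv q z : ℝ) : ℂ) = b z - q z * a z) :
    ∃ k : ℝ, (∀ z ∈ ball (0 : ℂ) R, z ≠ 0 → q z = k) ∧ ∀ z ∈ ball (0 : ℂ) R, b z = k * a z := by
  have hcircle (r : ℝ) (hr : r ∈ Ioo 0 R) :
      ∃ k : ℝ, (∀ z ∈ sphere (0 : ℂ) r, q z = k) ∧ ∀ z ∈ ball (0 : ℂ) r, b z = k * a z :=
    have hmem {z : ℂ} (hz : z ∈ sphere 0 r) := sphere_subset_ball hr.2 hz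
    have hne {z : ℂ} (hz : z ∈ sphere 0 r) : z ≠ 0 := ne_of_mem_sphere hz hr.1.ne'
    exists_const_on_circle_of_angular_ode hr.1 hr.2 ha hb ha0 hb0
      (fun z hz => hq z (hmem hz) (hne hz)) fun z hz => hode z (hmem hz) (hne hz)
  choose! k hqk hbk using hcircle
  have hk_eq (r : ℝ) (hr : r ∈ Ioo 0 R) (s : ℝ) (hs : s ∈ Ioo 0 R) : k r = k s := by
    obtain ⟨w, hw, haw⟩ := exists_mem_ball_ne_zero (lt_min hr.1 hs.1) ha hane
    have hwr := hbk r hr w (ball_subset_ball (min_le_left r s) hw)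
    have hws := hbk s hs w (ball_subset_ball (min_le_right r s) hw)
    exact_mod_cast mul_right_cancel₀ haw (hwr.symm.trans hws)
  obtain ⟨s, hs⟩ : (Ioo 0 R).Nonempty := nonempty_Ioo.2 (let ⟨_, hz, _⟩ := hane; pos_of_mem_ball hz)
  refine ⟨k s, fun z hz hz0 => ?_, fun z hz => ?_⟩
  · have hnorm : ‖z‖ ∈ Ioo 0 R := ⟨norm_pos_iff.2 hz0, mem_ball_zero_iff.1 hz⟩
    rw [hqk _ hnorm z (mem_sphere_zero_iff_norm.2 rfl), hk_eq _ hnorm s hs]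
  · obtain ⟨r, hzr, hrR⟩ := exists_between (mem_ball_zero_iff.1 hz)
    have hr : r ∈ Ioo 0 R := ⟨(norm_nonneg z).trans_lt hzr, hrR⟩
    rw [hbk r hr z (mem_ball_zero_iff.2 hzr), hk_eq r hr s hs]

theorem eq_const_of_angular_ode (hq : DifferentiableOn ℝ q (ball 0 R))
    (ha : DifferentiableOn ℂ a (ball 0 R)) (hb : DifferentiableOn ℂ b (ball 0 R)) (ha0 : a 0 = 0)
    (hane : ∃ z ∈ ball (0 : ℂ) R, a z ≠ 0)
    (hode : ∀ z ∈ ball (0 : ℂ) R, ((angularDeriv q z : ℝ) : ℂ) = b z - q z * a z) :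
    ∀ z ∈ ball (0 : ℂ) R, q z = q 0 ∧ b z = q 0 * a z := by
  have h0 : (0 : ℂ) ∈ ball 0 R := let ⟨_, hz, _⟩ := hane; mem_ball_self (pos_of_mem_ball hz)
  have hb0 : b 0 = 0 := by simpa [angularDeriv, ha0] using (hode 0 h0).symm
  have hq_at (z : ℂ) (hz : z ∈ ball 0 R) := hq.differentiableAt (isOpen_ball.mem_nhds hz)
  obtain ⟨k, hqk, hbk⟩ := exists_const_on_punctured_ball_of_angular_ode ha hb ha0 hb0 hane
    (fun z hz _ => hq_at z hz) fun z hz _ => hode z hz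
  have hq0 : q 0 = k := by
    have hev : q =ᶠ[𝓝[≠] 0] fun _ => k := by
      filter_upwards [self_mem_nhdsWithin, mem_nhdsWithin_of_mem_nhds (isOpen_ball.mem_nhds h0)]
        with z hz0 hz using hqk z hz hz0
    exact (((hq_at 0 h0).continuousAt.eventuallyEq_nhds_iff_eventuallyEq_nhdsNE
      continuousAt_const).1 hev).eq_of_nhds
  rw [hq0]
  exact fun z hz => ⟨(eq_or_ne z 0).elim (fun hz0 => hz0 ▸ hq0) (hqk z hz), hbk z hz⟩

end AngularODE

section Reduction

variable {β : ℝ} {Q₀ Q₁ q : ℂ → ℝ} {z α₁ α₂ : ℂ}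

theorem mul_angularDeriv_of_eqa
    (heqa : (2 * I * (β : ℂ) * z * wDeriv Q₀ z + I * α₁ * (1 + (Q₀ z : ℂ) ^ 2)).re = 0) :
    β * angularDeriv Q₀ z = (1 + Q₀ z ^ 2) * α₁.im := by
  have hsplit : 2 * I * (β : ℂ) * z * wDeriv Q₀ z + I * α₁ * (1 + (Q₀ z : ℂ) ^ 2)
      = ((2 * β : ℝ) : ℂ) * (I * z * wDeriv Q₀ z) + ((1 + Q₀ z ^ 2 : ℝ) : ℂ) * (I * α₁) := by
    push_cast
    ring
  rw [hsplit, add_re, re_ofReal_mul, re_I_mul_mul_wDeriv, re_ofReal_mul, I_mul_re] at heqa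
  linarith

theorem mul_im_eq_of_eqb {x y : ℝ}
    (heqb : (I * (1 + (x : ℂ) ^ 2) * α₂ - I * (y : ℂ) * α₁).re = 0) :
    y * α₁.im = (1 + x ^ 2) * α₂.im := by
  have hsplit : I * (1 + (x : ℂ) ^ 2) * α₂ - I * (y : ℂ) * α₁
      = ((1 + x ^ 2 : ℝ) : ℂ) * (I * α₂) - (y : ℂ) * (I * α₁) := by
    push_cast
    ring
  rw [hsplit, sub_re, re_ofReal_mul, re_ofReal_mul, I_mul_re, I_mul_re] at heqb
  linarith

theorem re_zeroth_order_term_eqc (x y : ℝ) (α₁ α₂ : ℂ) :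
    ((y : ℂ) / I * (I - x) * α₁
        + (1 / 2 + (x : ℂ) / (2 * I)) * (-(y : ℂ) * α₁ + (I - x) ^ 2 * α₂)).re
      = (y * α₁.re - 3 * x * y * α₁.im - (1 + x ^ 2) * α₂.re + x * (1 + x ^ 2) * α₂.im) / 2 := by
  have hdiv : (x : ℂ) / (2 * I) = -(x / 2 * I) := by rw [← div_div, div_I]
  simp only [hdiv, div_I, pow_two, add_re, sub_re, neg_re, mul_re, add_im, sub_im, neg_im, mul_im,
    I_re, I_im, ofReal_re, ofReal_im, one_re, one_im, div_ofNat_re, div_ofNat_im]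
  ring

theorem mul_angularDeriv_of_eqc (him : Q₁ z * α₁.im = (1 + Q₀ z ^ 2) * α₂.im)
    (heqc : (I * (β : ℂ) * z * wDeriv Q₁ z + (Q₁ z : ℂ) / I * (I - (Q₀ z : ℂ)) * α₁
      + (1 / 2 + (Q₀ z : ℂ) / (2 * I)) *
        (-(Q₁ z : ℂ) * α₁ + (I - (Q₀ z : ℂ)) ^ 2 * α₂)).re = 0) :
    β * angularDeriv Q₁ z
      = (1 + Q₀ z ^ 2) * α₂.re - Q₁ z * α₁.re + 2 * Q₀ z * Q₁ z * α₁.im := by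
  have hcomm : I * (β : ℂ) * z * wDeriv Q₁ z = (β : ℂ) * (I * z * wDeriv Q₁ z) := by ring
  rw [add_assoc, add_re, re_zeroth_order_term_eqc, hcomm, re_ofReal_mul, re_I_mul_mul_wDeriv]
    at heqc
  linear_combination 2 * heqc + Q₀ z * him

theorem mul_angularDeriv_eq_sub (hQ₀ : DifferentiableAt ℝ Q₀ z) (hq : DifferentiableAt ℝ q z)
    (hangular₀ : β * angularDeriv Q₀ z = (1 + Q₀ z ^ 2) * α₁.im)
    (him : q z * (1 + Q₀ z ^ 2) * α₁.im = (1 + Q₀ z ^ 2) * α₂.im)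
    (hangular₁ : β * angularDeriv (fun w => q w * (1 + Q₀ w ^ 2)) z
      = (1 + Q₀ z ^ 2) * α₂.re - q z * (1 + Q₀ z ^ 2) * α₁.re
        + 2 * Q₀ z * (q z * (1 + Q₀ z ^ 2)) * α₁.im) :
    (β : ℂ) * angularDeriv q z = α₂ - q z * α₁ := by
  have hne : 1 + Q₀ z ^ 2 ≠ 0 := by positivity
  rw [angularDeriv_mul_one_add_sq hQ₀ hq] at hangular₁
  rw [← ofReal_mul]
  apply Complex.ext
  · rw [ofReal_re, sub_re, re_ofReal_mul]
    apply mul_left_cancel₀ hne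
    linear_combination hangular₁ - 2 * Q₀ z * q z * hangular₀
  · rw [ofReal_im, sub_im, im_ofReal_mul]
    apply mul_left_cancel₀ hne
    linear_combination him

end Reduction

theorem stmt_12_general (R β : ℝ) (hβ : β ≠ 0) (Q₀ Q₁ : ℂ → ℝ) (a₁ a₂ : ℂ → ℂ)
    (hQ₀ : DifferentiableOn ℝ Q₀ (ball (0 : ℂ) R)) (hQ₁ : DifferentiableOn ℝ Q₁ (ball (0 : ℂ) R))
    (hQ₀0 : Q₀ 0 = 0)
    (ha₁ : DifferentiableOn ℂ a₁ (ball (0 : ℂ) R)) (ha₂ : DifferentiableOn ℂ a₂ (ball (0 : ℂ) R))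
    (ha₁0 : a₁ 0 = 0) (ha₁ne : ∃ z ∈ ball (0 : ℂ) R, a₁ z ≠ 0)
    (heqa : ∀ z ∈ ball (0 : ℂ) R,
      (2 * I * (β : ℂ) * z * wDeriv Q₀ z + I * a₁ z * (1 + (Q₀ z : ℂ) ^ 2)).re = 0)
    (heqb : ∀ z ∈ ball (0 : ℂ) R,
      (I * (1 + (Q₀ z : ℂ) ^ 2) * a₂ z - I * (Q₁ z : ℂ) * a₁ z).re = 0)
    (heqc : ∀ z ∈ ball (0 : ℂ) R,
      (I * (β : ℂ) * z * wDeriv Q₁ z + (Q₁ z : ℂ) / I * (I - (Q₀ z : ℂ)) * a₁ z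
        + (1 / 2 + (Q₀ z : ℂ) / (2 * I)) *
          (-(Q₁ z : ℂ) * a₁ z + (I - (Q₀ z : ℂ)) ^ 2 * a₂ z)).re = 0) :
    ∀ z ∈ ball (0 : ℂ) R,
      Q₁ z = Q₁ 0 * (1 + Q₀ z ^ 2) ∧ a₂ z = ((Q₁ 0 : ℝ) : ℂ) * a₁ z := by
  have hne (z : ℂ) : 1 + Q₀ z ^ 2 ≠ 0 := by positivity
  have hβ_cast : (β : ℂ) ≠ 0 := ofReal_ne_zero.2 hβ
  obtain ⟨q, hq, rfl⟩ : ∃ q : ℂ → ℝ, DifferentiableOn ℝ q (ball 0 R) ∧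
      Q₁ = fun z => q z * (1 + Q₀ z ^ 2) :=
    ⟨fun z => Q₁ z * (1 + Q₀ z ^ 2)⁻¹,
      hQ₁.fun_mul (((hQ₀.fun_pow 2).const_add 1).fun_inv fun z _ => hne z),
      funext fun z => (inv_mul_cancel_right₀ (hne z) (Q₁ z)).symm⟩
  have hode (z : ℂ) (hz : z ∈ ball 0 R) : (β : ℂ) * angularDeriv q z = a₂ z - q z * a₁ z := by
    have hnhds := isOpen_ball.mem_nhds hz
    have him := mul_im_eq_of_eqb (heqb z hz)
    exact mul_angularDeriv_eq_sub (hQ₀.differentiableAt hnhds) (hq.differentiableAt hnhds)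
      (mul_angularDeriv_of_eqa (heqa z hz)) him (mul_angularDeriv_of_eqc him (heqc z hz))
  intro z hz
  obtain ⟨hqz, haz⟩ := eq_const_of_angular_ode hq (ha₁.div_const β) (ha₂.div_const β)
    (by simp [ha₁0]) (by simpa [hβ] using ha₁ne)
    (fun w hw => by
      rw [← mul_div_assoc, ← sub_div, ← hode w hw, mul_div_cancel_left₀ _ hβ_cast]) z hz
  rw [← mul_div_assoc, div_left_inj' hβ_cast] at haz
  simp [hQ₀0, hqz, haz]

/-- Lemma A.3 (pde2): under equations (a), (b), (c) one has
`Q₁ ≡ Q₁(0)(1 + Q₀²)` and `a₂ ≡ Q₁(0)·a₁` on `Δ_{ε₀}`. -/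
theorem stmt_12 (ε₀ β : ℝ) (hε₀ : 0 < ε₀) (hβ : β ≠ 0)
    (Q₀ Q₁ : ℂ → ℝ) (a₁ a₂ : ℂ → ℂ)
    (hQ₀an : AnalyticOnNhd ℝ Q₀ (ball (0:ℂ) ε₀))
    (hQ₁an : AnalyticOnNhd ℝ Q₁ (ball (0:ℂ) ε₀))
    (hQ₀0 : Q₀ 0 = 0)
    (ha₁hol : DifferentiableOn ℂ a₁ (ball (0:ℂ) ε₀))
    (ha₂hol : DifferentiableOn ℂ a₂ (ball (0:ℂ) ε₀))
    (ha₁0 : a₁ 0 = 0) (ha₂0 : a₂ 0 = 0)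
    (ha₁ne : ∃ z ∈ ball (0:ℂ) ε₀, a₁ z ≠ 0)
    (heqa : ∀ z ∈ ball (0:ℂ) ε₀,
      (2 * Complex.I * (β:ℂ) * z * wDeriv Q₀ z
        + Complex.I * a₁ z * (1 + (Q₀ z : ℂ) ^ 2)).re = 0)
    (heqb : ∀ z ∈ ball (0:ℂ) ε₀,
      (Complex.I * (1 + (Q₀ z : ℂ) ^ 2) * a₂ z
        - Complex.I * (Q₁ z : ℂ) * a₁ z).re = 0)
    (heqc : ∀ z ∈ ball (0:ℂ) ε₀,
      (Complex.I * (β:ℂ) * z * wDeriv Q₁ z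
        + ((Q₁ z : ℂ) / Complex.I) * (Complex.I - (Q₀ z : ℂ)) * a₁ z
        + ((1/2 : ℂ) + (Q₀ z : ℂ) / (2 * Complex.I)) *
            (-(Q₁ z : ℂ) * a₁ z + (Complex.I - (Q₀ z : ℂ)) ^ 2 * a₂ z)).re = 0) :
    ∀ z ∈ ball (0:ℂ) ε₀,
      Q₁ z = Q₁ 0 * (1 + (Q₀ z) ^ 2) ∧ a₂ z = ((Q₁ 0 : ℝ) : ℂ) * a₁ z :=
  stmt_12_general ε₀ β hβ Q₀ Q₁ a₁ a₂ hQ₀an.differentiableOn hQ₁an.differentiableOn hQ₀0 ha₁hol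
    ha₂hol ha₁0 ha₁ne heqa heqb heqc
end

section
/- Let M be a germ at 0 of a real hypersurface in ℂ² defined by ρ(z₁,z₂) = Re z₁ + P(z₂) + f(z₂, Im z₁) = 0, where f is real analytic in a neighborhood of 0 in ℂ×ℝ with f(z₂,0) ≡ 0, P is C^∞-smooth with P(z₂) > 0 for all z₂ ≠ 0 in its domain and P(0) = 0, and P vanishes to infinite order at z₂ = 0. If H = h₁ ∂/∂z₁ + h₂ ∂/∂z₂ is a holomorphic vector field germ at (0,0), not identically zero, with h₁(0,0) = h₂(0,0) = 0, tangent to M, then h₁(0,z₂) ≡ 0 on a neighborhood of 0, and h₂(0,z₂) = iβz₂ + O(z₂²) as z₂ → 0 for some β ∈ ℝ∖{0}. -/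
open Filter Set Metric Complex

/-! Restrict the tangency equation to the points of the hypersurface with `Im z₁ = τ P(z₂)`; there
`z₁ = P(z₂) ((i - a(z₂)) τ - 1) + O(P²)`, where `a(z₂)` is the slope of `f(z₂, ·)` at `0`. Write
`H = z₁ ^ m (c(z₂) + z₁ d(z₂) + ⋯)` with `c ≢ 0` and divide by `P ^ m`. By Glaeser's inequality the
derivative of the flat function `P` is flat, so the limit equation is
`Re ((1 - i a) ((i - a) τ - 1) ^ m c₁) ≡ 0` to infinite order for every `τ`, and `c₁ ≡ 0`.

Write `c₂ = z ^ l u(z)` with `u(0) ≠ 0`. At the next order the tangency equation controls the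
derivative of `P` along multiples of `c₂`, and such a control contradicts positivity and flatness
of `P` by the maximum principle. If the derivative of `P` along `z ↦ z u(z)` is `O(P)`, then
`P / |z| ^ (2 n)` for large `n` has no positive maximum on a small disk unless `Re u(0) = 0`; for
`m ≠ 0`, comparing coefficients in `τ` yields the same estimate with `u` replaced by any complex
multiple, so `l ≤ 1` is impossible. If `l ≥ 2` and the derivative along `z ^ l u(z)` is at most
`C |z| ^ l P`, then `P exp(-N Re z)` for large `N` has no positive maximum on a thin sector.
Hence `m = 0`, `l = 1` and `Re u(0) = 0`. -/

open Asymptotics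
open scoped Topology

section MaximumPrinciple

theorem eventually_nhdsGT_lt_of_hasDerivAt_pos {φ : ℝ → ℝ} {d x : ℝ} (h : HasDerivAt φ d x)
    (hd : 0 < d) : ∀ᶠ s in 𝓝[>] x, φ x < φ s := by
  have hslope := (hasDerivWithinAt_iff_tendsto_slope' self_notMem_Ioi).1
    (h.hasDerivWithinAt (s := Ioi x))
  filter_upwards [hslope.eventually (lt_mem_nhds hd), self_mem_nhdsWithin] with s hs hxs
  rw [slope_def_field, div_pos_iff_of_pos_right (sub_pos.2 hxs)] at hs
  linarith

theorem le_of_forall_exists_hasLineDerivAt_pos {E : Type*} [NormedAddCommGroup E]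
    [NormedSpace ℝ E] {K : Set E} (hK : IsCompact K) {Q : E → ℝ} (hQ : ContinuousOn Q K) {x₀ : E}
    (h : ∀ p ∈ K, p ≠ x₀ → ∃ v : E, (∀ᶠ s : ℝ in 𝓝[>] 0, p + s • v ∈ K) ∧
      ∃ d > 0, HasLineDerivAt ℝ Q d p v) {p : E} (hp : p ∈ K) : Q p ≤ Q x₀ := by
  obtain ⟨q, hq, hmax⟩ := hK.exists_isMaxOn ⟨p, hp⟩ hQ
  obtain rfl | hne := eq_or_ne q x₀
  · exact hmax hp
  · obtain ⟨v, hv, d, hd, hQd⟩ := h q hq hne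
    obtain ⟨s, hs, hlt⟩ := (hv.and (eventually_nhdsGT_lt_of_hasDerivAt_pos hQd hd)).exists
    exact absurd (hmax hs) (by simpa using! hlt)

end MaximumPrinciple

/-- Vanishing to infinite order at the origin, expressed on punctured neighbourhoods. -/
def IsFlat {F : Type*} [Norm F] (f : ℂ → F) : Prop :=
  ∀ n : ℕ, f =O[𝓝[≠] 0] fun z => ‖z‖ ^ n

theorem IsFlat.isLittleO {F : Type*} [Norm F] {f : ℂ → F} (hf : IsFlat f) (n : ℕ) :
    f =o[𝓝[≠] 0] fun z => ‖z‖ ^ n := by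
  have hpow : (fun z : ℂ => ‖z‖ ^ (n + 1)) =o[𝓝 0] fun z => ‖z‖ ^ n :=
    (isLittleO_pow_pow n.lt_succ_self).comp_tendsto tendsto_norm_zero
  exact (hf (n + 1)).trans_isLittleO (hpow.mono nhdsWithin_le_nhds)

section DiskLemma

variable {P : ℂ → ℝ} {u : ℂ → ℂ}

theorem eventually_norm_one_sub_mul_le {w : ℂ} (hw : 0 < w.re) :
    ∀ᶠ s : ℝ in 𝓝[>] 0, ‖1 - s * w‖ ≤ 1 := by
  have hderiv : HasDerivAt (fun s : ℝ => -(‖1 - s * w‖ ^ 2)) (2 * w.re) 0 := by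
    have h : HasDerivAt (fun s : ℝ => 1 - s * w) (-w) 0 := by
      simpa using ((hasDerivAt_id (0 : ℝ)).ofReal_comp.mul_const w).const_sub 1
    simpa [inner] using! h.norm_sq.neg
  filter_upwards [eventually_nhdsGT_lt_of_hasDerivAt_pos hderiv (by positivity)] with s hs
  have : ‖1 - s * w‖ ^ 2 < 1 := by simpa using hs
  exact (pow_le_one_iff_of_nonneg (norm_nonneg _) two_ne_zero).1 this.le

theorem eventually_add_smul_neg_mul_mem_closedBall {δ : ℝ} {p w : ℂ} (hp : p ∈ closedBall 0 δ)
    (hw : 0 < w.re) : ∀ᶠ s : ℝ in 𝓝[>] 0, p + s • (-(p * w)) ∈ closedBall (0 : ℂ) δ := by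
  filter_upwards [eventually_norm_one_sub_mul_le hw] with s hs
  rw [mem_closedBall_zero_iff] at hp ⊢
  calc ‖p + s • (-(p * w))‖ = ‖p‖ * ‖1 - s * w‖ := by
        rw [← norm_mul, real_smul]; ring_nf
    _ ≤ ‖p‖ := mul_le_of_le_one_right (norm_nonneg p) hs
    _ ≤ δ := hp

theorem hasLineDerivAt_div_norm_sq_pow {p : ℂ} (hp : p ≠ 0) (hP : DifferentiableAt ℝ P p)
    (n : ℕ) (w : ℂ) :
    HasLineDerivAt ℝ (fun z => P z / (‖z‖ ^ 2) ^ n)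
      ((2 * n * w.re * P p - fderiv ℝ P p (p * w)) / (‖p‖ ^ 2) ^ n) p (-(p * w)) := by
  have hPl : HasDerivAt (fun s : ℝ => P (p + s • -(p * w))) (-fderiv ℝ P p (p * w)) 0 := by
    exact (hP.hasFDerivAt.hasLineDerivAt (-(p * w))).congr_deriv (map_neg _ _)
  have hNl : HasDerivAt (fun s : ℝ => ‖p + s • -(p * w)‖ ^ 2) (-2 * ‖p‖ ^ 2 * w.re) 0 := by
    have h := (hasStrictFDerivAt_norm_sq (F := ℂ) p).hasFDerivAt.hasLineDerivAt (-(p * w))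
    refine HasDerivAt.congr_deriv h ?_
    rw [← normSq_eq_norm_sq, normSq_apply]
    simp only [smul_apply, coe_innerSL_apply, inner_neg_right, Complex.inner, mul_re, mul_im,
      conj_re, conj_im, nsmul_eq_mul]
    push_cast
    ring
  refine (hPl.div (hNl.pow n) (by simp [hp])).congr_deriv ?_
  obtain _ | n := n
  · simp
  · simp only [Pi.pow_apply, zero_smul, add_zero, add_tsub_cancel_right]
    push_cast
    field_simp
    ring

theorem re_nonpos_of_fderiv_mul_le (hP : ∀ᶠ z in 𝓝[≠] 0, DifferentiableAt ℝ P z)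
    (hpos : ∀ᶠ z in 𝓝[≠] 0, 0 < P z) (hflat : IsFlat P) (hu : ContinuousAt u 0) {C : ℝ}
    (h : ∀ᶠ z in 𝓝[≠] 0, fderiv ℝ P z (z * u z) ≤ C * P z) : (u 0).re ≤ 0 := by
  by_contra! hu0
  obtain ⟨n, hn⟩ := exists_nat_gt (C / (u 0).re)
  have hre : ∀ᶠ z in 𝓝[≠] 0, (u 0).re / 2 < (u z).re :=
    ((continuous_re.continuousAt.comp hu).eventually (lt_mem_nhds (half_lt_self hu0))).filter_mono
      nhdsWithin_le_nhds
  obtain ⟨δ, hδ, hball⟩ := (nhdsWithin_hasBasis nhds_basis_closedBall _).eventually_iff.1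
    (((hP.and hpos).and (h.and hre)))
  set Q : ℂ → ℝ := fun z => P z / (‖z‖ ^ 2) ^ (n + 1)
  have hQ : ContinuousOn Q (closedBall 0 δ) := fun p hp => by
    refine ContinuousAt.continuousWithinAt ?_
    obtain rfl | hp0 := eq_or_ne p 0
    · refine continuousAt_iff_punctured_nhds.2 ?_
      simpa [Q, ← pow_mul] using (hflat.isLittleO (2 * (n + 1))).tendsto_div_nhds_zero
    · exact (hball ⟨hp, hp0⟩).1.1.continuousAt.div (by fun_prop) (by positivity)
  have hδK : (δ : ℂ) ∈ closedBall (0 : ℂ) δ := by simp [abs_of_pos hδ]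
  have hQδ : 0 < Q δ := by
    have hδ0 : (δ : ℂ) ≠ 0 := ofReal_ne_zero.2 hδ.ne'
    have := (hball ⟨hδK, hδ0⟩).1.2
    positivity
  have hmax : Q δ ≤ Q 0 :=
    le_of_forall_exists_hasLineDerivAt_pos (isCompact_closedBall 0 δ) hQ (fun p hp hp0 => by
      obtain ⟨⟨hPp, hposp⟩, hCp, hrep⟩ := hball ⟨hp, hp0⟩
      refine ⟨_, eventually_add_smul_neg_mul_mem_closedBall hp (by linarith), _, ?_,
        hasLineDerivAt_div_norm_sq_pow hp0 hPp (n + 1) (u p)⟩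
      have hC : C < 2 * (n + 1) * (u p).re := by
        rw [div_lt_iff₀ hu0] at hn
        nlinarith
      have : 0 < ‖p‖ := norm_pos_iff.2 hp0
      push_cast
      exact div_pos (by nlinarith) (by positivity)) hδK
  exact hQδ.not_ge (by simpa [Q] using hmax)

theorem re_eq_zero_of_fderiv_mul_isBigO (hP : ∀ᶠ z in 𝓝[≠] 0, DifferentiableAt ℝ P z)
    (hpos : ∀ᶠ z in 𝓝[≠] 0, 0 < P z) (hflat : IsFlat P) (hu : ContinuousAt u 0)
    (h : (fun z => fderiv ℝ P z (z * u z)) =O[𝓝[≠] 0] P) : (u 0).re = 0 := by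
  obtain ⟨C, hC⟩ := h.bound
  refine le_antisymm (re_nonpos_of_fderiv_mul_le hP hpos hflat hu (C := C) ?_)
    (neg_nonpos.1 (re_nonpos_of_fderiv_mul_le (u := -u) hP hpos hflat hu.neg (C := C) ?_))
  all_goals
    filter_upwards [hC, hpos] with z hz hPz
    rw [Real.norm_of_nonneg hPz.le] at hz
  · exact (le_abs_self _).trans hz
  · simpa using (neg_le_abs _).trans hz

end DiskLemma

section SectorLemma

/-- The closed sector of half-aperture `arctan ε` around the positive real axis, truncated at
`re = δ`. -/
def sector (δ ε : ℝ) : Set ℂ := {p | p.re ≤ δ ∧ |p.im| ≤ ε * p.re}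

variable {P : ℂ → ℝ} {u : ℂ → ℂ} {n : ℕ} {p v W : ℂ} {δ ε c : ℝ}

theorem re_nonneg_of_mem_sector (hε : 0 < ε) (hp : p ∈ sector δ ε) : 0 ≤ p.re :=
  nonneg_of_mul_nonneg_right ((abs_nonneg _).trans hp.2) hε

theorem norm_le_of_mem_sector (hε : 0 < ε) (hε1 : ε ≤ 1) (hp : p ∈ sector δ ε) :
    ‖p‖ ≤ 2 * p.re := by
  have hre := re_nonneg_of_mem_sector hε hp
  calc ‖p‖ ≤ |p.re| + |p.im| := norm_le_abs_re_add_abs_im p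
    _ ≤ p.re + 1 * p.re := by
        rw [abs_of_nonneg hre]
        exact add_le_add_right (hp.2.trans (by gcongr)) _
    _ = 2 * p.re := by ring

theorem re_pos_of_mem_sector (hε : 0 < ε) (hε1 : ε ≤ 1) (hp : p ∈ sector δ ε) (hp0 : p ≠ 0) :
    0 < p.re := by
  linarith [norm_le_of_mem_sector hε hε1 hp, norm_pos_iff.2 hp0]

theorem sector_subset_closedBall (hε : 0 < ε) (hε1 : ε ≤ 1) :
    sector δ ε ⊆ closedBall 0 (2 * δ) := fun p hp => by
  rw [mem_closedBall_zero_iff]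
  linarith [norm_le_of_mem_sector hε hε1 hp, hp.1]

theorem isCompact_sector (hε : 0 < ε) (hε1 : ε ≤ 1) : IsCompact (sector δ ε) :=
  isCompact_of_isClosed_isBounded
    ((isClosed_le continuous_re continuous_const).inter
      (isClosed_le (by fun_prop : Continuous fun p : ℂ => |p.im|) (by fun_prop)))
    (isBounded_closedBall.subset (sector_subset_closedBall hε hε1))

theorem eventually_add_mul_nonneg {a b : ℝ} (ha : 0 ≤ a) (hb : a = 0 → 0 < b) :
    ∀ᶠ s : ℝ in 𝓝[>] 0, 0 ≤ a + s * b := by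
  obtain rfl | ha := ha.eq_or_lt
  · filter_upwards [self_mem_nhdsWithin] with s (hs : 0 < s)
    have := hb rfl
    positivity
  · have hcont : ContinuousAt (fun s : ℝ => a + s * b) 0 := by fun_prop
    exact (hcont.eventually (lt_mem_nhds (by simpa using ha))).filter_mono nhdsWithin_le_nhds
      |>.mono fun s hs => hs.le

theorem eventually_add_smul_neg_mul_mem_sector (hp : p ∈ sector δ ε) (hre : 0 < p.re)
    (hW : 0 ≤ (p * W).re) (hupper : p.im = ε * p.re → 0 < W.im)
    (hlower : p.im = -(ε * p.re) → W.im < 0) :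
    ∀ᶠ s : ℝ in 𝓝[>] 0, p + s • (-(p * W)) ∈ sector δ ε := by
  obtain ⟨hpδ, hpε⟩ := hp
  rw [abs_le] at hpε
  have hup := eventually_add_mul_nonneg (a := ε * p.re - p.im) (b := (p * W).im - ε * (p * W).re)
    (by linarith) fun h => by
      have him : p.im = ε * p.re := by linarith
      have : (p * W).im - ε * (p * W).re = p.re * (1 + ε ^ 2) * W.im := by
        simp only [mul_im, mul_re, him]; ring
      rw [this]
      have := hupper him
      positivity
  have hlow := eventually_add_mul_nonneg (a := ε * p.re + p.im)
    (b := -(p * W).im - ε * (p * W).re) (by linarith) fun h => by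
      have him : p.im = -(ε * p.re) := by linarith
      have : -(p * W).im - ε * (p * W).re = p.re * (1 + ε ^ 2) * (-W.im) := by
        simp only [mul_im, mul_re, him]; ring
      rw [this]
      have := neg_pos.2 (hlower him)
      positivity
  filter_upwards [hup, hlow, self_mem_nhdsWithin] with s hs₁ hs₂ (hs : 0 < s)
  simp only [sector, mem_ofPred_eq, abs_le, add_re, add_im, smul_re, smul_im, neg_re, neg_im,
    smul_eq_mul]
  refine ⟨?_, ?_, ?_⟩ <;> nlinarith

theorem eq_re_mul_one_add_mul_I (hre : 0 < p.re) : p = p.re * (1 + (p.im / p.re : ℝ) * I) := by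
  apply Complex.ext
  · simp
  · rw [im_ofReal_mul]
    simp [mul_div_cancel₀ _ hre.ne']

theorem pow_mul_eq_re_pow_mul (hre : 0 < p.re) (m : ℕ) (v : ℂ) :
    p ^ m * v = (p.re ^ m : ℝ) * ((1 + (p.im / p.re : ℝ) * I) ^ m * v) := by
  conv_lhs => rw [eq_re_mul_one_add_mul_I hre]
  rw [mul_pow, ofReal_pow, mul_assoc]

theorem eventually_re_pow_mul_lower_bound (hc : 0 < c) (m : ℕ) :
    ∀ᶠ ε : ℝ in 𝓝[>] 0, ∀ᶠ v in 𝓝 (c : ℂ), ∀ p : ℂ, 0 < p.re → |p.im| ≤ ε * p.re →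
      c / 2 * p.re ^ m ≤ (p ^ m * v).re := by
  have hcont : ContinuousAt (fun q : ℝ × ℂ => ((1 + q.1 * I) ^ m * q.2).re) (0, (c : ℂ)) := by
    fun_prop
  have hprod : ∀ᶠ q in 𝓝 (0 : ℝ) ×ˢ 𝓝 (c : ℂ), c / 2 < ((1 + q.1 * I) ^ m * q.2).re := by
    rw [← nhds_prod_eq]
    exact hcont.eventually (lt_mem_nhds (by simpa using half_lt_self hc))
  obtain ⟨S, hS, V, hV, hSV⟩ := eventually_prod_iff.1 hprod
  obtain ⟨ε₀, hε₀, hball⟩ := eventually_nhds_iff_ball.1 hS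
  filter_upwards [Ioo_mem_nhdsGT hε₀] with ε hε
  filter_upwards [hV] with v hv p hre him
  have hσ : p.im / p.re ∈ ball (0 : ℝ) ε₀ := by
    rw [mem_ball_zero_iff, Real.norm_eq_abs, abs_div, abs_of_pos hre, div_lt_iff₀ hre]
    nlinarith [hε.2]
  rw [pow_mul_eq_re_pow_mul hre, re_ofReal_mul, mul_comm]
  have := hSV (hball _ hσ) hv
  gcongr

theorem eventually_im_one_add_mul_I_pow_pos (hn : n ≠ 0) :
    ∀ᶠ ε : ℝ in 𝓝[>] 0, 0 < ((1 + ε * I) ^ n).im := by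
  have hderiv : HasDerivAt (fun s : ℝ => ((1 + s * I) ^ n).im) n 0 := by
    have h : HasDerivAt (fun s : ℝ => 1 + s * I) I 0 := by
      simpa using ((hasDerivAt_id (0 : ℝ)).ofReal_comp.mul_const I).const_add 1
    simpa using! imCLM.hasFDerivAt.comp_hasDerivAt (0 : ℝ) (h.pow n)
  simpa using! eventually_nhdsGT_lt_of_hasDerivAt_pos hderiv (by positivity)

theorem eventually_im_pow_mul_pos_of_upper_edge (hc : 0 < c) (hε : 0 < ((1 + ε * I) ^ n).im) :
    ∀ᶠ v in 𝓝 (c : ℂ), ∀ p : ℂ, 0 < p.re → p.im = ε * p.re → 0 < (p ^ n * v).im := by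
  have hcont : ContinuousAt (fun v : ℂ => ((1 + ε * I) ^ n * v).im) c := by fun_prop
  filter_upwards [hcont.eventually (lt_mem_nhds (by simpa using mul_pos hε hc))]
    with v hv p hre him
  have hσ : p.im / p.re = ε := by rw [him, mul_div_cancel_right₀ _ hre.ne']
  rw [pow_mul_eq_re_pow_mul hre, im_ofReal_mul, hσ]
  positivity

theorem eventually_im_pow_mul_neg_of_lower_edge (hc : 0 < c) (hε : 0 < ((1 + ε * I) ^ n).im) :
    ∀ᶠ v in 𝓝 (c : ℂ), ∀ p : ℂ, 0 < p.re → p.im = -(ε * p.re) → (p ^ n * v).im < 0 := by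
  have hconj : Tendsto (starRingEnd ℂ) (𝓝 (c : ℂ)) (𝓝 (c : ℂ)) := by
    simpa using continuous_conj.tendsto (c : ℂ)
  filter_upwards [hconj.eventually (eventually_im_pow_mul_pos_of_upper_edge hc hε)]
    with v hv p hre him
  have := hv (starRingEnd ℂ p) (by simpa) (by simp [him])
  rw [← map_pow, ← map_mul, conj_im] at this
  linarith

theorem hasLineDerivAt_mul_exp_neg_mul_re (hP : DifferentiableAt ℝ P p) (N : ℝ) (V : ℂ) :
    HasLineDerivAt ℝ (fun z => P z * Real.exp (-(N * z.re)))
      ((N * V.re * P p - fderiv ℝ P p V) * Real.exp (-(N * p.re))) p (-V) := by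
  have hre : HasFDerivAt (fun z : ℂ => -(N * z.re)) (-(N • reCLM)) p :=
    (reCLM.hasFDerivAt.const_mul N).neg
  refine HasDerivAt.congr_deriv ((hP.hasFDerivAt.mul hre.exp).hasLineDerivAt (-V)) ?_
  simp only [map_neg, smul_apply, neg_apply, _root_.add_apply, reCLM_apply, smul_eq_mul]
  ring

theorem mul_norm_pow_lt_of_mem_sector {m : ℕ} {C N R : ℝ} (hε : 0 < ε) (hε1 : ε ≤ 1)
    (hp : p ∈ sector δ ε) (hre : 0 < p.re) (hN0 : 0 ≤ N) (hN : |C| * 2 ^ m < N * c)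
    (hR : c * p.re ^ m ≤ R) : C * ‖p‖ ^ m < N * R :=
  calc C * ‖p‖ ^ m ≤ |C| * (2 * p.re) ^ m := by
        gcongr
        exacts [le_abs_self C, norm_le_of_mem_sector hε hε1 hp]
    _ = |C| * 2 ^ m * p.re ^ m := by ring
    _ < N * c * p.re ^ m := by gcongr
    _ = N * (c * p.re ^ m) := by ring
    _ ≤ N * R := by gcongr

theorem exists_forall_eventually_pow_mul_bounds (hc : 0 < c) (hn : n ≠ 0) :
    ∃ ε ∈ Ioo (0 : ℝ) 1, ∀ᶠ v in 𝓝 (c : ℂ), ∀ p : ℂ, 0 < p.re →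
      (|p.im| ≤ ε * p.re → c / 2 * p.re ^ (n + 1) ≤ (p ^ (n + 1) * v).re) ∧
      (p.im = ε * p.re → 0 < (p ^ n * v).im) ∧ (p.im = -(ε * p.re) → (p ^ n * v).im < 0) := by
  obtain ⟨ε, hlow, hε, hε01⟩ := ((eventually_re_pow_mul_lower_bound hc (n + 1)).and
    ((eventually_im_one_add_mul_I_pow_pos hn).and (Ioo_mem_nhdsGT one_pos))).exists
  refine ⟨ε, hε01, ?_⟩
  filter_upwards [hlow, eventually_im_pow_mul_pos_of_upper_edge hc hε,
    eventually_im_pow_mul_neg_of_lower_edge hc hε] with v hre hup hlo p hp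
  exact ⟨hre p hp, hup p hp, hlo p hp⟩

theorem not_eventually_fderiv_pow_mul_le_of_pos
    (hP : ∀ᶠ z in 𝓝 0, DifferentiableAt ℝ P z) (hP0 : P 0 = 0)
    (hpos : ∀ᶠ z in 𝓝[≠] 0, 0 < P z) (hn : n ≠ 0) (hu : ContinuousAt u 0) (hc : 0 < c)
    (hu0 : u 0 = c) (C : ℝ) :
    ¬ ∀ᶠ z in 𝓝[≠] 0, fderiv ℝ P z (z ^ (n + 1) * u z) ≤ C * ‖z‖ ^ (n + 1) * P z := by
  intro h
  obtain ⟨ε, ⟨hε0, hε1⟩, hV⟩ := exists_forall_eventually_pow_mul_bounds hc hn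
  rw [← hu0] at hV
  obtain ⟨δ, hδ, hball⟩ := (nhds_basis_closedBall.eventually_iff).1
    (hP.and ((hu.eventually hV).and (eventually_nhdsWithin_iff.1 (hpos.and h))))
  set K := sector (δ / 2) ε
  have hK : K ⊆ closedBall 0 δ := by
    simpa [mul_div_cancel₀] using sector_subset_closedBall (δ := δ / 2) hε0 hε1.le
  obtain ⟨N, hN⟩ := exists_gt (|C| * 2 ^ (n + 1) / (c / 2))
  have hN0 : 0 < N := lt_of_le_of_lt (by positivity) hN
  rw [div_lt_iff₀ (by positivity)] at hN
  set Q : ℂ → ℝ := fun z => P z * Real.exp (-(N * z.re))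
  have hQ : ContinuousOn Q K := fun p hp =>
    ((hball (hK hp)).1.continuousAt.mul (by fun_prop)).continuousWithinAt
  have hδK : ((δ / 2 : ℝ) : ℂ) ∈ K := by
    refine ⟨by simp, ?_⟩
    simp only [ofReal_im, abs_zero, ofReal_re]
    positivity
  have hQδ : 0 < Q (δ / 2 : ℝ) :=
    mul_pos ((hball (hK hδK)).2.2 (by simpa using hδ.ne')).1 (Real.exp_pos _)
  have hmax : Q (δ / 2 : ℝ) ≤ Q 0 :=
    le_of_forall_exists_hasLineDerivAt_pos (isCompact_sector hε0 hε1.le) hQ (fun p hp hp0 => by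
      obtain ⟨hPp, hVp, hPC⟩ := hball (hK hp)
      obtain ⟨hposp, hCp⟩ := hPC hp0
      have hx := re_pos_of_mem_sector hε0 hε1.le hp hp0
      obtain ⟨hre, hup, hlo⟩ := hVp p hx
      specialize hre hp.2
      have hVre : 0 < (p ^ (n + 1) * u p).re := lt_of_lt_of_le (by positivity) hre
      have hpW : p ^ (n + 1) * u p = p * (p ^ n * u p) := by ring
      refine ⟨-(p ^ (n + 1) * u p), ?_, _, ?_, hasLineDerivAt_mul_exp_neg_mul_re hPp N _⟩
      · rw [hpW] at hVre ⊢
        exact eventually_add_smul_neg_mul_mem_sector hp hx hVre.le hup hlo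
      · have hCN := mul_norm_pow_lt_of_mem_sector hε0 hε1.le hp hx hN0.le hN hre
        exact mul_pos (by nlinarith) (Real.exp_pos _)) hδK
  exact hQδ.not_ge (by simpa [Q, hP0] using hmax)

theorem exists_norm_eq_one_pow_mul_eq_norm (hn : n ≠ 0) {b : ℂ} (hb : b ≠ 0) :
    ∃ ω : ℂ, ‖ω‖ = 1 ∧ ω ^ n * b = ‖b‖ := by
  obtain ⟨ω, hω⟩ := IsAlgClosed.exists_pow_nat_eq ((‖b‖ : ℂ) / b) (Nat.pos_of_ne_zero hn)
  refine ⟨ω, (pow_eq_one_iff_of_nonneg (norm_nonneg ω) hn).1 ?_, ?_⟩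
  · rw [← norm_pow, hω, norm_div, norm_real, norm_norm, div_self (norm_ne_zero_iff.2 hb)]
  · rw [hω, div_mul_cancel₀ _ hb]

theorem fderiv_comp_mul_left {ω : ℂ} {y : ℂ} (h : DifferentiableAt ℝ P (ω * y)) (v : ℂ) :
    fderiv ℝ (fun y => P (ω * y)) y v = fderiv ℝ P (ω * y) (ω * v) := by
  have hmul : HasFDerivAt (fun y : ℂ => ω * y) (ω • ContinuousLinearMap.id ℝ ℂ) y := by
    simpa using (hasFDerivAt_id (𝕜 := ℝ) y).const_mul ω
  have hcomp : HasFDerivAt (fun y => P (ω * y)) _ y := h.hasFDerivAt.comp y hmul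
  simp [hcomp.fderiv]

theorem not_eventually_fderiv_pow_mul_le
    (hP : ∀ᶠ z in 𝓝 0, DifferentiableAt ℝ P z) (hP0 : P 0 = 0)
    (hpos : ∀ᶠ z in 𝓝[≠] 0, 0 < P z) {l : ℕ} (hl : 2 ≤ l) (hu : ContinuousAt u 0)
    (hu0 : u 0 ≠ 0) (C : ℝ) :
    ¬ ∀ᶠ z in 𝓝[≠] 0, fderiv ℝ P z (z ^ l * u z) ≤ C * ‖z‖ ^ l * P z := by
  intro h
  obtain ⟨n, rfl⟩ : ∃ n, l = n + 1 := ⟨l - 1, by lia⟩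
  obtain ⟨ω, hω1, hωu⟩ := exists_norm_eq_one_pow_mul_eq_norm (n := n) (by lia) hu0
  have hω0 : ω ≠ 0 := norm_ne_zero_iff.1 (by simp [hω1])
  have hcont : ContinuousAt (fun y : ℂ => ω * y) 0 := by fun_prop
  have hrot : Tendsto (fun y => ω * y) (𝓝 0) (𝓝 0) := by simpa using hcont.tendsto
  have hrot' : Tendsto (fun y => ω * y) (𝓝[≠] 0) (𝓝[≠] 0) :=
    hrot.inf (by simp [hω0])
  refine not_eventually_fderiv_pow_mul_le_of_pos (P := fun y => P (ω * y)) (n := n)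
    (u := fun y => ω ^ n * u (ω * y)) (c := ‖u 0‖) ?_ (by simpa) (hrot'.eventually hpos) (by lia)
    ?_ (norm_pos_iff.2 hu0) (by simpa) C ?_
  · filter_upwards [hrot.eventually hP] with y hy using hy.fun_comp' y (by fun_prop)
  · exact continuousAt_const.mul (ContinuousAt.comp (by simpa) hcont)
  · filter_upwards [hrot'.eventually h, (hrot.mono_left nhdsWithin_le_nhds).eventually hP]
      with y hy hPy
    have hV : ω * (y ^ (n + 1) * (ω ^ n * u (ω * y))) = (ω * y) ^ (n + 1) * u (ω * y) := by ring
    rw [fderiv_comp_mul_left hPy, hV]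
    simpa [hω1] using hy

end SectorLemma

section LeadingTerms

variable {F : Type*} [NormedAddCommGroup F] [NormedSpace ℂ F] {H : ℂ × ℂ → F} {m : ℕ}
  {c d : ℂ → F}

/-- `H(ζ, z) = ζ ^ m (c z + ζ d z) + O(ζ ^ (m + 2))` with `c ≢ 0`: the first two terms of the
expansion of `H` in powers of the first variable. -/
structure HasLeadingTermsFst (H : ℂ × ℂ → F) (m : ℕ) (c d : ℂ → F) : Prop where
  analyticAt_leading : AnalyticAt ℂ c 0
  analyticAt_next : AnalyticAt ℂ d 0
  not_eventually_eq_zero : ¬ ∀ᶠ z in 𝓝 0, c z = 0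
  isBigO_sub : (fun q => H q - q.1 ^ m • (c q.2 + q.1 • d q.2)) =O[𝓝 0] fun q => q.1 ^ (m + 2)

namespace HasLeadingTermsFst

theorem isBigO_sub_leading (h : HasLeadingTermsFst H m c d) :
    (fun q => H q - q.1 ^ m • c q.2) =O[𝓝 0] fun q => q.1 ^ (m + 1) := by
  have hd : (fun q : ℂ × ℂ => d q.2) =O[𝓝 0] fun _ => (1 : ℂ) :=
    (h.analyticAt_next.continuousAt.comp (f := Prod.snd) (x := (0 : ℂ × ℂ))
      continuous_snd.continuousAt).isBigO_one ℂ
  have hfst : (fun q : ℂ × ℂ => q.1) =O[𝓝 0] fun _ => (1 : ℂ) :=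
    continuous_fst.continuousAt.isBigO_one ℂ
  have hpow := isBigO_refl (fun q : ℂ × ℂ => q.1 ^ (m + 1)) (𝓝 0)
  have hnext : (fun q : ℂ × ℂ => q.1 ^ (m + 1) • d q.2) =O[𝓝 0] fun q => q.1 ^ (m + 1) := by
    simpa using hpow.smul hd
  have herr : (fun q : ℂ × ℂ => q.1 ^ (m + 2)) =O[𝓝 0] fun q => q.1 ^ (m + 1) := by
    simpa [pow_succ _ (m + 1)] using hpow.mul hfst
  refine ((h.isBigO_sub.trans herr).add hnext).congr_left fun q => ?_
  rw [smul_add, smul_smul, ← pow_succ]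
  abel

theorem eventually_eq_of_order_zero (h : HasLeadingTermsFst H 0 c d) :
    ∀ᶠ z in 𝓝 0, H (0, z) = c z := by
  have htendsto : Tendsto (fun z : ℂ => ((0 : ℂ), z)) (𝓝 0) (𝓝 0) :=
    Continuous.tendsto' (by fun_prop) _ _ rfl
  have hzero := h.isBigO_sub_leading.comp_tendsto htendsto
  simp only [Function.comp_def, pow_zero, one_smul, zero_add, pow_one] at hzero
  exact (isBigO_zero_right_iff.1 hzero).mono fun z hz => sub_eq_zero.1 hz

theorem isBigO_sub_fst {H : ℂ × ℂ → F × F} {c d : ℂ → F × F} (h : HasLeadingTermsFst H m c d)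
    (hc : ∀ᶠ z in 𝓝 0, (c z).1 = 0) :
    (fun q => (H q).1 - q.1 ^ (m + 1) • (d q.2).1) =O[𝓝 0] fun q => q.1 ^ (m + 1 + 1) := by
  refine ((IsBigO.of_norm_le fun q => norm_fst_le _).trans h.isBigO_sub.norm_left).congr' ?_ .rfl
  filter_upwards [(continuous_snd.tendsto (0 : ℂ × ℂ)).eventually hc] with q hq
  simp only [Prod.fst_sub, Prod.smul_fst, Prod.fst_add, hq, zero_add, smul_smul, ← pow_succ]

end HasLeadingTermsFst

end LeadingTerms

section TaylorCoefficients

variable {F : Type*} [NormedAddCommGroup F] [NormedSpace ℂ F]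

/-- The coefficient of `ζ ^ j` in the Taylor expansion of `ζ ↦ h (ζ, z)` at `0`, as a function
of the second variable `z`. -/
noncomputable def taylorCoeffFst (h : ℂ × ℂ → F) (j : ℕ) (z : ℂ) : F :=
  (j.factorial : ℂ)⁻¹ • iteratedDeriv j (fun ζ => h (ζ, z)) 0

theorem norm_sub_sum_range_le_of_hasSum_pow_smul {c : ℕ → F} {y : F} {ζ : ℂ} {ρ M : ℝ}
    (hρ : 0 < ρ) (hM : ∀ j, ‖c j‖ ≤ M / ρ ^ j) (hsum : HasSum (fun j => ζ ^ j • c j) y)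
    (hζ : ‖ζ‖ ≤ ρ / 2) (n : ℕ) :
    ‖y - ∑ j ∈ Finset.range n, ζ ^ j • c j‖ ≤ 2 * M / ρ ^ n * ‖ζ‖ ^ n := by
  have hM0 : 0 ≤ M := by simpa using (norm_nonneg _).trans (hM 0)
  have hratio : ‖ζ‖ / ρ ≤ 1 / 2 := by rw [div_le_iff₀ hρ]; linarith
  have hgeom : HasSum (fun j : ℕ => M / ρ ^ n * ‖ζ‖ ^ n * (1 / 2 : ℝ) ^ j)
      (M / ρ ^ n * ‖ζ‖ ^ n * 2) := hasSum_geometric_two.mul_left _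
  refine (((hasSum_nat_add_iff' n).2 hsum).norm_le_of_bounded hgeom fun j => ?_).trans_eq (by ring)
  calc ‖ζ ^ (j + n) • c (j + n)‖ = ‖c (j + n)‖ * ‖ζ‖ ^ (j + n) := by
        rw [norm_smul, norm_pow, mul_comm]
    _ ≤ M / ρ ^ (j + n) * ‖ζ‖ ^ (j + n) := by gcongr; exact hM _
    _ = M / ρ ^ n * ‖ζ‖ ^ n * (‖ζ‖ / ρ) ^ j := by rw [div_pow, pow_add, pow_add]; field_simp
    _ ≤ M / ρ ^ n * ‖ζ‖ ^ n * (1 / 2) ^ j := by gcongr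

section Polydisc

variable {h : ℂ × ℂ → F} {ρ M : ℝ} {ζ z : ℂ}

theorem prodMk_mem_closedBall_zero (hζ : ζ ∈ closedBall 0 ρ) (hz : z ∈ closedBall 0 ρ) :
    (ζ, z) ∈ closedBall 0 ρ := by
  rw [mem_closedBall_zero_iff] at *
  exact max_le hζ hz

theorem differentiableOn_slice_fst (hd : DifferentiableOn ℂ h (closedBall 0 ρ))
    (hz : z ∈ closedBall 0 ρ) : DifferentiableOn ℂ (fun ζ => h (ζ, z)) (closedBall 0 ρ) :=
  hd.fun_comp (f := fun ζ => (ζ, z)) (by fun_prop) fun _ hζ => prodMk_mem_closedBall_zero hζ hz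

theorem differentiableOn_slice_snd (hd : DifferentiableOn ℂ h (closedBall 0 ρ))
    (hζ : ζ ∈ closedBall 0 ρ) : DifferentiableOn ℂ (fun z => h (ζ, z)) (closedBall 0 ρ) :=
  hd.fun_comp (f := fun z => (ζ, z)) (by fun_prop) fun _ hz => prodMk_mem_closedBall_zero hζ hz

variable [CompleteSpace F]

theorem hasSum_pow_smul_taylorCoeffFst (hd : DifferentiableOn ℂ h (closedBall 0 ρ))
    (hζ : ζ ∈ ball 0 ρ) (hz : z ∈ closedBall 0 ρ) :
    HasSum (fun j => ζ ^ j • taylorCoeffFst h j z) (h (ζ, z)) := by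
  have hsum := hasSum_taylorSeries_on_ball
    ((differentiableOn_slice_fst hd hz).mono ball_subset_closedBall) hζ
  refine hsum.congr_fun fun j => ?_
  rw [taylorCoeffFst, sub_zero, smul_comm]

theorem norm_taylorCoeffFst_le (hρ : 0 < ρ) (hd : DifferentiableOn ℂ h (closedBall 0 ρ))
    (hM : ∀ q ∈ closedBall (0 : ℂ × ℂ) ρ, ‖h q‖ ≤ M) (hz : z ∈ closedBall 0 ρ) (j : ℕ) :
    ‖taylorCoeffFst h j z‖ ≤ M / ρ ^ j := by
  have hcl : DiffContOnCl ℂ (fun ζ => h (ζ, z)) (ball 0 ρ) :=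
    DifferentiableOn.diffContOnCl (by
      rw [closure_ball _ hρ.ne']; exact differentiableOn_slice_fst hd hz)
  have hcauchy := norm_iteratedDeriv_le_of_forall_mem_sphere_norm_le j hρ hcl (C := M)
    fun ζ hζ => hM (ζ, z) (prodMk_mem_closedBall_zero (sphere_subset_closedBall hζ) hz)
  rw [taylorCoeffFst, norm_smul, norm_inv, Complex.norm_natCast, inv_mul_le_iff₀ (by positivity)]
  exact hcauchy.trans_eq (mul_div_assoc _ _ _)

theorem norm_sub_sum_range_taylorCoeffFst_le (hρ : 0 < ρ)
    (hd : DifferentiableOn ℂ h (closedBall 0 ρ))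
    (hM : ∀ q ∈ closedBall (0 : ℂ × ℂ) ρ, ‖h q‖ ≤ M) (hζ : ‖ζ‖ ≤ ρ / 2)
    (hz : z ∈ closedBall 0 ρ) (n : ℕ) :
    ‖h (ζ, z) - ∑ j ∈ Finset.range n, ζ ^ j • taylorCoeffFst h j z‖ ≤
      2 * M / ρ ^ n * ‖ζ‖ ^ n :=
  norm_sub_sum_range_le_of_hasSum_pow_smul hρ (norm_taylorCoeffFst_le hρ hd hM hz)
    (hasSum_pow_smul_taylorCoeffFst hd (by rw [mem_ball_zero_iff]; linarith) hz) hζ n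

theorem tendstoUniformlyOn_taylorCoeffFst (hρ : 0 < ρ)
    (hd : DifferentiableOn ℂ h (closedBall 0 ρ))
    (hM : ∀ q ∈ closedBall (0 : ℂ × ℂ) ρ, ‖h q‖ ≤ M) (j : ℕ) :
    TendstoUniformlyOn (fun ζ z => (ζ ^ j)⁻¹ •
        (h (ζ, z) - ∑ i ∈ Finset.range j, ζ ^ i • taylorCoeffFst h i z))
      (taylorCoeffFst h j) (𝓝[≠] 0) (closedBall 0 ρ) := by
  rw [Metric.tendstoUniformlyOn_iff]
  intro ε hε
  have hlim : Tendsto (fun ζ : ℂ => 2 * M / ρ ^ (j + 1) * ‖ζ‖) (𝓝[≠] 0) (𝓝 0) := by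
    have : Continuous fun ζ : ℂ => 2 * M / ρ ^ (j + 1) * ‖ζ‖ := by fun_prop
    simpa using (this.tendsto 0).mono_left nhdsWithin_le_nhds
  filter_upwards [hlim.eventually (gt_mem_nhds hε), self_mem_nhdsWithin,
    nhdsWithin_le_nhds (closedBall_mem_nhds (0 : ℂ) (half_pos hρ))] with ζ hζε (hζ0 : ζ ≠ 0) hζ z hz
  have hrem := norm_sub_sum_range_taylorCoeffFst_le hρ hd hM (mem_closedBall_zero_iff.1 hζ) hz
    (j + 1)
  rw [Finset.sum_range_succ, ← sub_sub] at hrem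
  have hζj : 0 < ‖ζ ^ j‖ := norm_pos_iff.2 (pow_ne_zero j hζ0)
  have hfactor : (ζ ^ j)⁻¹ • (h (ζ, z) - ∑ i ∈ Finset.range j, ζ ^ i • taylorCoeffFst h i z)
      - taylorCoeffFst h j z = (ζ ^ j)⁻¹ • (h (ζ, z) -
        ∑ i ∈ Finset.range j, ζ ^ i • taylorCoeffFst h i z - ζ ^ j • taylorCoeffFst h j z) := by
    rw [smul_sub _ _ (ζ ^ j • _), inv_smul_smul₀ (pow_ne_zero j hζ0)]
  refine lt_of_le_of_lt ?_ hζε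
  rw [dist_eq_norm', hfactor, norm_smul, norm_inv, inv_mul_le_iff₀ hζj]
  exact hrem.trans_eq (by rw [norm_pow]; ring)

theorem differentiableOn_taylorCoeffFst (hρ : 0 < ρ) (hd : DifferentiableOn ℂ h (closedBall 0 ρ))
    (j : ℕ) : DifferentiableOn ℂ (taylorCoeffFst h j) (ball 0 ρ) := by
  obtain ⟨M, hM⟩ := (isCompact_closedBall (0 : ℂ × ℂ) ρ).exists_bound_of_continuousOn
    hd.continuousOn
  induction j using Nat.strong_induction_on with
  | _ j ih =>
    refine ((tendstoUniformlyOn_taylorCoeffFst hρ hd hM j).mono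
      ball_subset_closedBall).tendstoLocallyUniformlyOn.differentiableOn ?_ isOpen_ball
    filter_upwards [nhdsWithin_le_nhds (closedBall_mem_nhds (0 : ℂ) hρ)] with ζ hζ
    refine (((differentiableOn_slice_snd hd hζ).mono ball_subset_closedBall).sub ?_).const_smul _
    exact DifferentiableOn.fun_sum fun i hi => (ih i (Finset.mem_range.1 hi)).const_smul _

end Polydisc

theorem eqOn_zero_ball_of_eventually_eq_zero {E : Type*} [NormedAddCommGroup E] [NormedSpace ℂ E]
    [CompleteSpace F] {h : E → F} {s : ℝ} (hd : DifferentiableOn ℂ h (ball 0 s))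
    (h0 : ∀ᶠ q in 𝓝 0, h q = 0) {q : E} (hq : q ∈ ball 0 s) : h q = 0 := by
  set U : Set ℂ := (fun t => t • q) ⁻¹' ball 0 s
  have hcont : Continuous fun t : ℂ => t • q := by fun_prop
  have hU : IsOpen U := isOpen_ball.preimage hcont
  have hconv : Convex ℝ U := by
    let : NormedSpace ℝ E := NormedSpace.restrictScalars ℝ ℂ E
    exact (convex_ball (0 : E) s).linear_preimage
      ((LinearMap.toSpanSingleton ℂ E q).restrictScalars ℝ)
  have han : AnalyticOnNhd ℂ (fun t : ℂ => h (t • q)) U :=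
    (hd.fun_comp (f := fun t : ℂ => t • q) (by fun_prop) fun _ ht => ht).analyticOnNhd hU
  have hline : Tendsto (fun t : ℂ => t • q) (𝓝 0) (𝓝 0) := by simpa using hcont.tendsto 0
  simpa using han.eqOn_zero_of_preconnected_of_eventuallyEq_zero hconv.isPreconnected
    (by simpa [U] using pos_of_mem_ball hq) (hline.eventually h0) (x := 1) (by simpa [U] using hq)

variable [CompleteSpace F] {h : ℂ × ℂ → F} {ρ : ℝ}

theorem eventually_eq_zero_of_forall_taylorCoeffFst (hρ : 0 < ρ)
    (hd : DifferentiableOn ℂ h (closedBall 0 ρ))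
    (h0 : ∀ j, ∀ᶠ z in 𝓝 0, taylorCoeffFst h j z = 0) : ∀ᶠ q in 𝓝 0, h q = 0 := by
  filter_upwards [ball_mem_nhds (0 : ℂ × ℂ) hρ] with q hq
  rw [Prod.zero_eq_mk, ← ball_prod_same] at hq
  have hcoeff : ∀ j, taylorCoeffFst h j q.2 = 0 := fun j =>
    ((differentiableOn_taylorCoeffFst hρ hd j).analyticOnNhd
      isOpen_ball).eqOn_zero_of_preconnected_of_eventuallyEq_zero
      (convex_ball _ _).isPreconnected (mem_ball_self hρ) (h0 j) hq.2
  have hsum := hasSum_pow_smul_taylorCoeffFst hd hq.1 (ball_subset_closedBall hq.2)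
  simp only [hcoeff, smul_zero] at hsum
  exact hsum.unique hasSum_zero

theorem isBigO_sub_sum_range_taylorCoeffFst (hρ : 0 < ρ)
    (hd : DifferentiableOn ℂ h (closedBall 0 ρ)) (n : ℕ) :
    (fun q => h q - ∑ j ∈ Finset.range n, q.1 ^ j • taylorCoeffFst h j q.2) =O[𝓝 0]
      fun q => q.1 ^ n := by
  obtain ⟨M, hM⟩ := (isCompact_closedBall (0 : ℂ × ℂ) ρ).exists_bound_of_continuousOn
    hd.continuousOn
  refine IsBigO.of_bound (2 * M / ρ ^ n) ?_
  filter_upwards [closedBall_mem_nhds (0 : ℂ × ℂ) (half_pos hρ)] with q hq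
  obtain ⟨hq₁, hq₂⟩ := max_le_iff.1 (mem_closedBall_zero_iff.1 hq)
  rw [norm_pow]
  exact norm_sub_sum_range_taylorCoeffFst_le hρ hd hM hq₁
    (mem_closedBall_zero_iff.2 (hq₂.trans (half_le_self hρ.le))) n

theorem exists_hasLeadingTermsFst {s : ℝ} (hd : DifferentiableOn ℂ h (ball 0 s))
    (hne : ∃ q ∈ ball 0 s, h q ≠ 0) :
    ∃ (m : ℕ) (c d : ℂ → F), HasLeadingTermsFst h m c d := by
  classical
  obtain ⟨q, hq, hhq⟩ := hne
  have hs := pos_of_mem_ball hq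
  have hρ := half_pos hs
  have hd' := hd.mono (closedBall_subset_ball (half_lt_self hs))
  have hex : ∃ m, ¬ ∀ᶠ z in 𝓝 0, taylorCoeffFst h m z = 0 := by
    by_contra! hzero
    exact hhq (eqOn_zero_ball_of_eventually_eq_zero hd
      (eventually_eq_zero_of_forall_taylorCoeffFst hρ hd' hzero) hq)
  obtain ⟨m, hm, hmin⟩ : ∃ m, (¬ ∀ᶠ z in 𝓝 0, taylorCoeffFst h m z = 0) ∧
      ∀ j < m, ∀ᶠ z in 𝓝 0, taylorCoeffFst h j z = 0 :=
    ⟨Nat.find hex, Nat.find_spec hex, fun j hj => not_not.1 (Nat.find_min hex hj)⟩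
  have han : ∀ j, AnalyticAt ℂ (taylorCoeffFst h j) 0 := fun j =>
    (differentiableOn_taylorCoeffFst hρ hd' j).analyticAt (ball_mem_nhds _ hρ)
  refine ⟨m, _, _, han m, han (m + 1), hm, ?_⟩
  have hlow : ∀ᶠ z in 𝓝 (0 : ℂ), ∀ j ∈ Finset.range m, taylorCoeffFst h j z = 0 :=
    (eventually_all_finset _).2 fun j hj => hmin j (Finset.mem_range.1 hj)
  refine (isBigO_sub_sum_range_taylorCoeffFst hρ hd' (m + 2)).congr' ?_ .rfl
  filter_upwards [(continuous_snd.tendsto (0 : ℂ × ℂ)).eventually hlow] with q hq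
  rw [Finset.sum_range_succ, Finset.sum_range_succ,
    Finset.sum_eq_zero fun j hj => by rw [hq j hj, smul_zero], zero_add, smul_add, smul_smul,
    ← pow_succ]

end TaylorCoefficients

section SecondOrder

theorem tendsto_prodMk_zero_fst {X : Type*} [TopologicalSpace X] {x : X} :
    Tendsto (fun q : X × ℝ => (q.1, (0 : ℝ))) (𝓝 (x, 0)) (𝓝 (x, 0)) :=
  Continuous.tendsto' (by fun_prop) _ _ rfl

variable {E G : Type*} [NormedAddCommGroup E] [NormedSpace ℝ E] [NormedAddCommGroup G]
  [NormedSpace ℝ G]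

theorem isBigO_fderiv_sub_fderiv {φ : E → G} {x : E} (h : ContDiffAt ℝ 2 φ x) :
    (fun p : E × E => fderiv ℝ φ p.1 - fderiv ℝ φ p.2) =O[𝓝 (x, x)] fun p => p.1 - p.2 := by
  have hφ' : ContDiffAt ℝ 1 (fderiv ℝ φ) x := h.fderiv_right (by norm_num)
  exact (hφ'.hasStrictFDerivAt one_ne_zero).isBigO_sub

theorem eventually_differentiableAt {φ : E → G} {x : E} (h : ContDiffAt ℝ 2 φ x) :
    ∀ᶠ y in 𝓝 x, DifferentiableAt ℝ φ y :=
  (h.eventually (by simp)).mono fun _ hy => hy.differentiableAt two_ne_zero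

theorem isBigO_sub_sub_fderiv {φ : E → G} {x : E} (h : ContDiffAt ℝ 2 φ x) :
    (fun p : E × E => φ p.2 - φ p.1 - fderiv ℝ φ p.1 (p.2 - p.1)) =O[𝓝 (x, x)]
      fun p => ‖p.2 - p.1‖ ^ 2 := by
  obtain ⟨C, hC⟩ := (isBigO_fderiv_sub_fderiv h).bound
  obtain ⟨δ, hδ, hball⟩ := eventually_nhds_iff_ball.1
    (hC.and ((continuous_fst.tendsto (x, x)).eventually (eventually_differentiableAt h)))
  rw [← ball_prod_same] at hball
  refine IsBigO.of_bound |C| ?_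
  filter_upwards [prod_mem_nhds (ball_mem_nhds x hδ) (ball_mem_nhds x hδ)] with ⟨y, z⟩ hyz
  have hseg : segment ℝ y z ⊆ ball x δ := (convex_ball x δ).segment_subset hyz.1 hyz.2
  have hbound : ∀ w ∈ segment ℝ y z, ‖fderiv ℝ φ w - fderiv ℝ φ y‖ ≤ |C| * ‖z - y‖ := by
    intro w hw
    refine (hball (w, y) ⟨hseg hw, hyz.1⟩).1.trans ?_
    gcongr
    exacts [le_abs_self C, norm_sub_le_of_mem_segment hw]
  have hmvt := (convex_segment y z).norm_image_sub_le_of_norm_fderiv_le'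
    (fun w hw => (hball (w, y) ⟨hseg hw, hyz.1⟩).2) hbound
    (left_mem_segment ℝ y z) (right_mem_segment ℝ y z)
  rwa [mul_assoc, ← sq, ← norm_norm (z - y), ← norm_pow] at hmvt

theorem norm_le_of_forall_unit_sub_nonneg {L : StrongDual ℝ E} {S K : ℝ} (hS : 0 < S) (hK : 0 ≤ K)
    (h : ∀ v, ‖v‖ = 1 → 0 ≤ S ^ 2 - S * L v + K * S ^ 2) : ‖L‖ ≤ (1 + K) * S := by
  have hle : ∀ v, ‖v‖ = 1 → L v ≤ (1 + K) * S := fun v hv =>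
    le_of_mul_le_mul_left (by linarith [h v hv]) hS
  refine L.opNorm_le_of_unit_norm (by positivity) fun v hv => abs_le.2 ⟨?_, hle v hv⟩
  have := hle (-v) (by rwa [norm_neg])
  rw [map_neg] at this
  linarith

/-- Glaeser's inequality: for unit `v`, Taylor's formula at `y` and `0 ≤ P (y - √(P y) • v)` give
`√(P y) * fderiv ℝ P y v ≤ (1 + K) * P y`. -/
theorem isBigO_fderiv_sqrt_of_nonneg {P : E → ℝ} {x : E} (h : ContDiffAt ℝ 2 P x) (hx : P x = 0)
    (hnonneg : ∀ᶠ y in 𝓝 x, 0 ≤ P y) : fderiv ℝ P =O[𝓝 x] fun y => √(P y) := by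
  obtain ⟨K, hK0, hK⟩ := (isBigO_sub_sub_fderiv h).exists_nonneg
  obtain ⟨δ, hδ, hball⟩ := eventually_nhds_iff_ball.1
    (hK.bound.and ((continuous_snd.tendsto (x, x)).eventually hnonneg))
  rw [← ball_prod_same] at hball
  have hsqrt : ∀ᶠ y in 𝓝 x, √(P y) < δ / 2 :=
    h.continuousAt.sqrt.eventually (gt_mem_nhds (by simpa [hx] using half_pos hδ))
  refine IsBigO.of_bound (1 + K) ?_
  filter_upwards [hsqrt, ball_mem_nhds x (half_pos hδ), hnonneg.eventually_nhds] with y hyS hy hyP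
  rw [Real.norm_of_nonneg (Real.sqrt_nonneg _)]
  obtain hS | hS := (Real.sqrt_nonneg (P y)).eq_or_lt
  · have hPy : P y = 0 := (Real.sqrt_eq_zero hyP.self_of_nhds).1 hS.symm
    have hmin : IsLocalMin P y := hyP.mono fun w hw => hPy.trans_le hw
    rw [hmin.fderiv_eq_zero, norm_zero]
    positivity
  · refine norm_le_of_forall_unit_sub_nonneg hS hK0 fun v hv => ?_
    have hmem : y - √(P y) • v ∈ ball x δ := by
      rw [mem_ball, dist_eq_norm] at hy ⊢
      calc ‖y - √(P y) • v - x‖ = ‖(y - x) - √(P y) • v‖ := by rw [sub_right_comm]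
        _ ≤ ‖y - x‖ + ‖√(P y) • v‖ := norm_sub_le _ _
        _ < δ := by rw [norm_smul, hv, Real.norm_of_nonneg hS.le]; linarith
    obtain ⟨hquad, hpos⟩ := hball (y, y - √(P y) • v) ⟨ball_subset_ball (by linarith) hy, hmem⟩
    have hup := (le_abs_self _).trans hquad
    simp only [sub_sub_cancel_left, norm_neg, norm_smul, hv, mul_one, map_neg, map_smul,
      smul_eq_mul, norm_pow, Real.norm_of_nonneg hS.le] at hup
    linarith [Real.sq_sqrt hyP.self_of_nhds]

variable {f : E → ℝ → G} {x : E}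

theorem hasDerivAt_uncurry_right {t : ℝ}
    (h : DifferentiableAt ℝ (Function.uncurry f) (x, t)) :
    HasDerivAt (f x) (fderiv ℝ (Function.uncurry f) (x, t) (0, 1)) t :=
  h.hasFDerivAt.comp_hasDerivAt t ((hasDerivAt_const t x).prodMk (hasDerivAt_id t))

theorem hasFDerivAt_uncurry_left {t : ℝ}
    (h : DifferentiableAt ℝ (Function.uncurry f) (x, t)) :
    HasFDerivAt (fun y => f y t)
      ((fderiv ℝ (Function.uncurry f) (x, t)).comp (ContinuousLinearMap.inl ℝ E ℝ)) x :=
  h.hasFDerivAt.comp (f := fun y => (y, t)) x (hasFDerivAt_prodMk_left x t)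

theorem continuousAt_deriv_zero (hf : ContDiffAt ℝ 2 (Function.uncurry f) (x, 0)) :
    ContinuousAt (fun y => deriv (f y) 0) x := by
  have hcont : ContinuousAt (fun y => fderiv ℝ (Function.uncurry f) (y, 0) (0, 1)) x :=
    ((hf.fderiv_right (m := 1) (by norm_num)).continuousAt.comp
      (f := fun y => (y, (0 : ℝ))) (by fun_prop)).clm_apply continuousAt_const
  have hdiff : ∀ᶠ y in 𝓝 x, DifferentiableAt ℝ (Function.uncurry f) (y, 0) :=
    (Continuous.tendsto' (by fun_prop) x _ rfl).eventually (eventually_differentiableAt hf)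
  exact hcont.congr (hdiff.mono fun y hy => (hasDerivAt_uncurry_right hy).deriv.symm)

theorem isBigO_fderiv_uncurry_sub (hf : ContDiffAt ℝ 2 (Function.uncurry f) (x, 0)) :
    (fun q : E × ℝ => fderiv ℝ (Function.uncurry f) q - fderiv ℝ (Function.uncurry f) (q.1, 0))
      =O[𝓝 (x, 0)] fun q => q.2 := by
  refine ((isBigO_fderiv_sub_fderiv hf).comp_tendsto
    (tendsto_id.prodMk_nhds tendsto_prodMk_zero_fst)).trans
      (IsBigO.of_bound' (.of_forall fun q => ?_))
  simp [Prod.norm_def]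

theorem isBigO_deriv_sub_deriv_zero (hf : ContDiffAt ℝ 2 (Function.uncurry f) (x, 0)) :
    (fun q : E × ℝ => deriv (f q.1) q.2 - deriv (f q.1) 0) =O[𝓝 (x, 0)] fun q => q.2 := by
  have happly := ((ContinuousLinearMap.apply ℝ G ((0 : E), (1 : ℝ))).isBigO_comp _ _).trans
    (isBigO_fderiv_uncurry_sub hf)
  refine happly.congr' ?_ .rfl
  filter_upwards [eventually_differentiableAt hf,
    tendsto_prodMk_zero_fst.eventually (eventually_differentiableAt hf)] with q hq hq₀
  rw [(hasDerivAt_uncurry_right hq).deriv, (hasDerivAt_uncurry_right hq₀).deriv]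
  rfl

theorem isBigO_sub_smul_deriv_zero (hf : ContDiffAt ℝ 2 (Function.uncurry f) (x, 0))
    (hf0 : ∀ᶠ y in 𝓝 x, f y 0 = 0) :
    (fun q : E × ℝ => f q.1 q.2 - q.2 • deriv (f q.1) 0) =O[𝓝 (x, 0)] fun q => q.2 ^ 2 := by
  have htaylor := (isBigO_sub_sub_fderiv hf).comp_tendsto
    (tendsto_prodMk_zero_fst.prodMk_nhds tendsto_id)
  refine (htaylor.congr' ?_ .rfl).trans (IsBigO.of_norm_le fun q => ?_)
  · filter_upwards [(continuous_fst.tendsto (x, (0 : ℝ))).eventually hf0,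
      tendsto_prodMk_zero_fst.eventually (eventually_differentiableAt hf)] with q hq hq₀
    have hdiff : q - (q.1, 0) = q.2 • ((0 : E), (1 : ℝ)) := by ext <;> simp
    simp only [Function.comp_apply, id_eq, hdiff, map_smul,
      (hasDerivAt_uncurry_right hq₀).deriv, Function.uncurry, hq, sub_zero]
  · simp [Prod.norm_def]

theorem isBigO_fderiv_left (hf : ContDiffAt ℝ 2 (Function.uncurry f) (x, 0))
    (hf0 : ∀ᶠ y in 𝓝 x, f y 0 = 0) :
    (fun q : E × ℝ => fderiv ℝ (fun y => f y q.2) q.1) =O[𝓝 (x, 0)] fun q => q.2 := by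
  have hcomp := (((ContinuousLinearMap.compL ℝ E (E × ℝ) G).flip
    (ContinuousLinearMap.inl ℝ E ℝ)).isBigO_comp _ _).trans (isBigO_fderiv_uncurry_sub hf)
  refine hcomp.congr' ?_ .rfl
  filter_upwards [(continuous_fst.tendsto (x, (0 : ℝ))).eventually hf0.eventually_nhds,
    eventually_differentiableAt hf,
    tendsto_prodMk_zero_fst.eventually (eventually_differentiableAt hf)] with q hq₁ hq hq₀
  have hzero : fderiv ℝ (fun y => f y 0) q.1 = 0 :=
    (EventuallyEq.fderiv_eq hq₁).trans (fderiv_const_apply 0)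
  rw [map_sub, (hasFDerivAt_uncurry_left hq).fderiv]
  rw [(hasFDerivAt_uncurry_left hq₀).fderiv] at hzero
  exact sub_eq_self.2 hzero

end SecondOrder

theorem isBigO_clm_apply {ι E F : Type*} [NormedAddCommGroup E] [NormedSpace ℝ E]
    [NormedAddCommGroup F] [NormedSpace ℝ F] {l : Filter ι} {L : ι → E →L[ℝ] F} {v : ι → E}
    {g h : ι → ℝ} (hL : L =O[l] g) (hv : v =O[l] h) :
    (fun i => L i (v i)) =O[l] fun i => g i * h i :=
  (IsBigO.of_norm_le fun i => (L i).le_opNorm (v i)).trans (hL.norm_left.mul hv.norm_left)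

section PerturbedPowers

variable {ι : Type*} {l : Filter ι} {p : ι → ℝ} {ζ w : ι → ℂ}

theorem isBigO_of_pow_mul_isBigO {u v : ι → ℝ} (hp : ∀ᶠ i in l, p i ≠ 0) {m : ℕ}
    (h : (fun i => p i ^ m * u i) =O[l] fun i => p i ^ m * v i) : u =O[l] v := by
  refine ((isBigO_refl (fun i => (p i ^ m)⁻¹) l).mul h).congr' ?_ ?_
  all_goals
    filter_upwards [hp] with i hi
    exact inv_mul_cancel_left₀ (pow_ne_zero m hi) _

theorem isBigO_of_sub_mul_isBigO_sq (hp : p =O[l] fun _ => (1 : ℝ)) (hw : w =O[l] fun _ => (1 : ℝ))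
    (h : (fun i => ζ i - p i * w i) =O[l] fun i => p i ^ 2) : ζ =O[l] p := by
  have hsq : (fun i => p i ^ 2) =O[l] p := by simpa [sq] using hp.mul (isBigO_refl p l)
  have hmul : (fun i => (p i : ℂ) * w i) =O[l] p := by
    simpa using (isBigO_ofReal_left.2 (isBigO_refl p l)).mul hw
  simpa using (h.trans hsq).add hmul

theorem isBigO_pow_sub_mul_pow (hp : p =O[l] fun _ => (1 : ℝ)) (hw : w =O[l] fun _ => (1 : ℝ))
    (h : (fun i => ζ i - p i * w i) =O[l] fun i => p i ^ 2) (m : ℕ) :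
    (fun i => ζ i ^ m - (p i * w i) ^ m) =O[l] fun i => p i ^ (m + 1) := by
  have hmul : (fun i => (p i : ℂ) * w i) =O[l] p := by
    simpa using (isBigO_ofReal_left.2 (isBigO_refl p l)).mul hw
  induction m with
  | zero => simpa using isBigO_zero _ _
  | succ m ih =>
    have hfirst := (isBigO_of_sub_mul_isBigO_sq hp hw h).mul ih
    have hsecond := (h.mul (hmul.pow m)).congr_right
      (g₂ := fun i => p i * p i ^ (m + 1)) fun i => by ring
    exact (hfirst.add hsecond).congr (fun i => by ring) fun i => by ring

theorem isBigO_mul_pow_smul {F : Type*} [NormedAddCommGroup F] [NormedSpace ℂ F] {D : ι → F}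
    {g : ι → ℝ} (hw : w =O[l] fun _ => (1 : ℝ)) (hD : D =O[l] g) (m : ℕ) :
    (fun i => (p i * w i : ℂ) ^ m • D i) =O[l] fun i => p i ^ m * g i := by
  have hmul : (fun i => (p i : ℂ) * w i) =O[l] p := by
    simpa using (isBigO_ofReal_left.2 (isBigO_refl p l)).mul hw
  exact (hmul.pow m).smul hD

theorem isBigO_sub_mul_pow_smul {F : Type*} [NormedAddCommGroup F] [NormedSpace ℂ F] {G D : ι → F}
    {m : ℕ} (hp : p =O[l] fun _ => (1 : ℝ)) (hw : w =O[l] fun _ => (1 : ℝ))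
    (h : (fun i => ζ i - p i * w i) =O[l] fun i => p i ^ 2) (hD : D =O[l] fun _ => (1 : ℝ))
    (hG : (fun i => G i - ζ i ^ m • D i) =O[l] fun i => ζ i ^ (m + 1)) :
    (fun i => G i - (p i * w i) ^ m • D i) =O[l] fun i => p i ^ (m + 1) := by
  have hlead : (fun i => (ζ i ^ m - (p i * w i) ^ m) • D i) =O[l] fun i => p i ^ (m + 1) := by
    simpa using (isBigO_pow_sub_mul_pow hp hw h m).smul hD
  refine ((hG.trans ((isBigO_of_sub_mul_isBigO_sq hp hw h).pow (m + 1))).add hlead).congr_left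
    fun i => ?_
  rw [sub_smul]
  abel

end PerturbedPowers

section Hypersurface

theorem eq_zero_of_continuousAt_of_isBigO {φ : ℂ → ℝ} (hφ : ContinuousAt φ 0)
    (h : φ =O[𝓝[≠] 0] fun z => ‖z‖) : φ 0 = 0 :=
  tendsto_nhds_unique (hφ.tendsto.mono_left nhdsWithin_le_nhds)
    (h.trans_tendsto (tendsto_norm_zero.mono_left nhdsWithin_le_nhds))

variable {P : ℂ → ℝ} {f : ℂ → ℝ → ℝ} {H : ℂ × ℂ → ℂ × ℂ}

theorem re_mul_wDeriv (u : ℂ → ℝ) (z v : ℂ) : (v * wDeriv u z).re = fderiv ℝ u z v / 2 := by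
  have hdecomp : fderiv ℝ u z v = v.re * fderiv ℝ u z 1 + v.im * fderiv ℝ u z I := by
    conv_lhs => rw [show v = v.re • (1 : ℂ) + v.im • I by simp]
    rw [map_add, map_smul, map_smul, smul_eq_mul, smul_eq_mul]
  rw [wDeriv, ← mul_div_assoc, div_ofNat_re, hdecomp]
  simp

/-- The germ at the origin of a hypersurface `Re z₁ + P(z₂) + f(z₂, Im z₁) = 0` whose profile `P`
is positive off `0` and vanishes to infinite order at `0`, where `f(·, 0) ≡ 0`. -/
structure IsFlatHypersurface (P : ℂ → ℝ) (f : ℂ → ℝ → ℝ) : Prop where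
  contDiffAt_profile : ContDiffAt ℝ 2 P 0
  profile_pos : ∀ᶠ z in 𝓝[≠] 0, 0 < P z
  isFlat_profile : IsFlat P
  contDiffAt_remainder : ContDiffAt ℝ 2 (Function.uncurry f) (0, 0)
  remainder_zero : ∀ᶠ z in 𝓝 0, f z 0 = 0

/-- Tangency at the origin, as a germ, of the field `H₁ ∂/∂z₁ + H₂ ∂/∂z₂` to the hypersurface
`Re z₁ + P(z₂) + f(z₂, Im z₁) = 0`. -/
def IsTangentField (P : ℂ → ℝ) (f : ℂ → ℝ → ℝ) (H : ℂ × ℂ → ℂ × ℂ) : Prop :=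
  ∀ᶠ q : ℂ × ℂ in 𝓝 0, q.1.re + P q.2 + f q.2 q.1.im = 0 →
    ((H q).1 * wDeriv (fun w => w.re + P q.2 + f q.2 w.im) q.1
      + (H q).2 * wDeriv (fun w => q.1.re + P w + f w q.1.im) q.2).re = 0

/-- The slope at `t = 0` of `t ↦ f z t`. -/
noncomputable def tilt (f : ℂ → ℝ → ℝ) (z : ℂ) : ℝ := deriv (f z) 0

/-- The first coordinate of the point of the hypersurface over `z₂ = z` with imaginary part
`τ * P z`. -/
noncomputable def graphPoint (P : ℂ → ℝ) (f : ℂ → ℝ → ℝ) (τ : ℝ) (z : ℂ) : ℂ :=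
  I * (τ * P z : ℝ) - P z - f z (τ * P z)

/-- The coefficient of `P` in `graphPoint P f τ` when `f` has slope `a`. -/
noncomputable def direction (a τ : ℝ) : ℂ := (I - a) * τ - 1

theorem continuous_direction {τ : ℝ} : Continuous fun a => direction a τ := by
  unfold direction
  fun_prop

theorem graphPoint_re (τ : ℝ) (z : ℂ) : (graphPoint P f τ z).re = -P z - f z (τ * P z) := by
  simp [graphPoint]

theorem graphPoint_im (τ : ℝ) (z : ℂ) : (graphPoint P f τ z).im = τ * P z := by
  simp [graphPoint]

namespace IsFlatHypersurface

theorem profile_ne_zero (hM : IsFlatHypersurface P f) : ∀ᶠ z in 𝓝[≠] 0, P z ≠ 0 :=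
  hM.profile_pos.mono fun _ hz => hz.ne'

theorem profile_zero (hM : IsFlatHypersurface P f) : P 0 = 0 :=
  eq_zero_of_continuousAt_of_isBigO hM.contDiffAt_profile.continuousAt
    (by simpa using hM.isFlat_profile 1)

theorem tendsto_profile (hM : IsFlatHypersurface P f) : Tendsto P (𝓝 0) (𝓝 0) := by
  simpa only [hM.profile_zero] using hM.contDiffAt_profile.continuousAt.tendsto

theorem tendsto_mul_profile (hM : IsFlatHypersurface P f) (τ : ℝ) :
    Tendsto (fun z => (z, τ * P z)) (𝓝 0) (𝓝 (0, 0)) := by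
  simpa using tendsto_id.prodMk_nhds (hM.tendsto_profile.const_mul τ)

theorem continuousAt_tilt (hM : IsFlatHypersurface P f) : ContinuousAt (tilt f) 0 :=
  continuousAt_deriv_zero hM.contDiffAt_remainder

theorem continuousAt_direction (hM : IsFlatHypersurface P f) (τ : ℝ) :
    ContinuousAt (fun z => direction (tilt f z) τ) 0 :=
  continuous_direction.continuousAt.comp hM.continuousAt_tilt

theorem isFlat_fderiv_profile (hM : IsFlatHypersurface P f) : IsFlat (fderiv ℝ P) := by
  intro n
  have hnonneg : ∀ᶠ z in 𝓝 0, 0 ≤ P z := by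
    rw [← nhdsNE_sup_pure, eventually_sup]
    exact ⟨hM.profile_pos.mono fun _ hz => hz.le, hM.profile_zero.ge⟩
  have hglaeser : fderiv ℝ P =O[𝓝[≠] 0] fun z => √(P z) :=
    (isBigO_fderiv_sqrt_of_nonneg hM.contDiffAt_profile hM.profile_zero hnonneg).mono
      nhdsWithin_le_nhds
  refine hglaeser.trans (((hM.isFlat_profile (2 * n)).sqrt
    (.of_forall fun z => by positivity)).congr_right fun z => ?_)
  rw [mul_comm, pow_mul, Real.sqrt_sq (by positivity)]

theorem isBigO_graphPoint_sub (hM : IsFlatHypersurface P f) (τ : ℝ) :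
    (fun z => graphPoint P f τ z - P z * direction (tilt f z) τ) =O[𝓝 0] fun z => P z ^ 2 := by
  have htaylor :=
    (isBigO_sub_smul_deriv_zero hM.contDiffAt_remainder hM.remainder_zero).comp_tendsto
      (hM.tendsto_mul_profile τ)
  refine (isBigO_ofReal_left.2 ((htaylor.trans ?_).neg_left)).congr_left fun z => ?_
  · simpa [Function.comp_def, mul_pow] using
      (isBigO_refl (fun z => P z ^ 2) (𝓝 0)).const_mul_left (τ ^ 2)
  · simp only [graphPoint, direction, tilt, Function.comp_apply, smul_eq_mul]
    push_cast
    ring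

theorem tendsto_graphPoint (hM : IsFlatHypersurface P f) (τ : ℝ) :
    Tendsto (fun z => (graphPoint P f τ z, z)) (𝓝 0) (𝓝 0) := by
  have hpoint : graphPoint P f τ =O[𝓝 0] P :=
    isBigO_of_sub_mul_isBigO_sq (hM.tendsto_profile.isBigO_one ℝ)
      ((hM.continuousAt_direction τ).isBigO_one ℝ) (hM.isBigO_graphPoint_sub τ)
  exact (hpoint.trans_tendsto hM.tendsto_profile).prodMk_nhds tendsto_id

theorem isBigO_deriv_sub_tilt (hM : IsFlatHypersurface P f) (τ : ℝ) :
    (fun z => deriv (f z) (τ * P z) - tilt f z) =O[𝓝 0] P :=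
  ((isBigO_deriv_sub_deriv_zero hM.contDiffAt_remainder).comp_tendsto
    (hM.tendsto_mul_profile τ)).trans ((isBigO_refl P _).const_mul_left τ)

theorem isBigO_fderiv_remainder (hM : IsFlatHypersurface P f) (τ : ℝ) :
    (fun z => fderiv ℝ (fun w => f w (τ * P z)) z) =O[𝓝 0] P :=
  ((isBigO_fderiv_left hM.contDiffAt_remainder hM.remainder_zero).comp_tendsto
    (hM.tendsto_mul_profile τ)).trans ((isBigO_refl P _).const_mul_left τ)

end IsFlatHypersurface

theorem fderiv_re_add_const_add_comp_im {g : ℝ → ℝ} {ζ : ℂ} (hg : DifferentiableAt ℝ g ζ.im)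
    (c : ℝ) (v : ℂ) :
    fderiv ℝ (fun w : ℂ => w.re + c + g w.im) ζ v = v.re + deriv g ζ.im * v.im := by
  have hcomp : HasFDerivAt (fun w : ℂ => g w.im) (deriv g ζ.im • imCLM) ζ :=
    HasDerivAt.comp_hasFDerivAt (f := imCLM) ζ hg.hasDerivAt imCLM.hasFDerivAt
  have hsum : HasFDerivAt (fun w : ℂ => w.re + c + g w.im) (reCLM + deriv g ζ.im • imCLM) ζ :=
    (reCLM.hasFDerivAt.add_const c).add hcomp
  simp [hsum.fderiv]

namespace IsTangentField

theorem eventually_eq_zero (hH : IsTangentField P f H) (hM : IsFlatHypersurface P f) (τ : ℝ) :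
    ∀ᶠ z in 𝓝 0,
      (H (graphPoint P f τ z, z)).1.re
        + deriv (f z) (τ * P z) * (H (graphPoint P f τ z, z)).1.im
        + (fderiv ℝ P z (H (graphPoint P f τ z, z)).2
        + fderiv ℝ (fun w => f w (τ * P z)) z (H (graphPoint P f τ z, z)).2) = 0 := by
  filter_upwards [(hM.tendsto_graphPoint τ).eventually hH,
    eventually_differentiableAt hM.contDiffAt_profile,
    (hM.tendsto_mul_profile τ).eventually
      (eventually_differentiableAt hM.contDiffAt_remainder)] with z hz hPz hfz
  have hleft := (hasFDerivAt_uncurry_left hfz).differentiableAt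
  have hfst := fderiv_re_add_const_add_comp_im (ζ := graphPoint P f τ z) (g := f z)
    (by rw [graphPoint_im]; exact (hasDerivAt_uncurry_right hfz).differentiableAt) (P z)
  specialize hz (by rw [graphPoint_re, graphPoint_im]; ring)
  rw [add_re, re_mul_wDeriv, re_mul_wDeriv, hfst, graphPoint_im,
    fderiv_fun_add (hPz.const_add _) hleft, fderiv_const_add, _root_.add_apply] at hz
  linarith

theorem isBigO_re_add_fderiv (hH : IsTangentField P f H) (hM : IsFlatHypersurface P f) (τ : ℝ) :
    (fun z => ((1 - I * tilt f z) * (H (graphPoint P f τ z, z)).1).re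
      + fderiv ℝ P z (H (graphPoint P f τ z, z)).2) =O[𝓝 0]
      fun z => P z * ‖H (graphPoint P f τ z, z)‖ := by
  have htilt : (fun z => (deriv (f z) (τ * P z) - tilt f z) * (H (graphPoint P f τ z, z)).1.im)
      =O[𝓝 0] fun z => P z * ‖H (graphPoint P f τ z, z)‖ :=
    (hM.isBigO_deriv_sub_tilt τ).mul (.of_norm_le fun z =>
      (abs_im_le_norm _).trans (norm_fst_le _))
  have hrem : (fun z => fderiv ℝ (fun w => f w (τ * P z)) z (H (graphPoint P f τ z, z)).2)
      =O[𝓝 0] fun z => P z * ‖H (graphPoint P f τ z, z)‖ :=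
    isBigO_clm_apply (hM.isBigO_fderiv_remainder τ) (.of_norm_le fun z => norm_snd_le _)
  refine (htilt.add hrem).neg_left.congr' ?_ .rfl
  filter_upwards [hH.eventually_eq_zero hM τ] with z hz
  have hre : ((1 - I * tilt f z) * (H (graphPoint P f τ z, z)).1).re
      = (H (graphPoint P f τ z, z)).1.re + tilt f z * (H (graphPoint P f τ z, z)).1.im := by
    simp
  rw [hre]
  linarith

end IsTangentField

end Hypersurface

section Restriction

variable {P : ℂ → ℝ} {f : ℂ → ℝ → ℝ} {H : ℂ × ℂ → ℂ × ℂ} {m : ℕ} {c d : ℂ → ℂ × ℂ}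

theorem IsFlatHypersurface.isBigO_sub_leading {F : Type*} [NormedAddCommGroup F] [NormedSpace ℂ F]
    (hM : IsFlatHypersurface P f) {G : ℂ × ℂ → F} {D : ℂ → F} (hD : ContinuousAt D 0)
    (hG : (fun q => G q - q.1 ^ m • D q.2) =O[𝓝 0] fun q => q.1 ^ (m + 1)) (τ : ℝ) :
    (fun z => G (graphPoint P f τ z, z) - (P z * direction (tilt f z) τ) ^ m • D z) =O[𝓝 0]
      fun z => P z ^ (m + 1) :=
  isBigO_sub_mul_pow_smul (hM.tendsto_profile.isBigO_one ℝ)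
    ((hM.continuousAt_direction τ).isBigO_one ℝ) (hM.isBigO_graphPoint_sub τ) (hD.isBigO_one ℝ)
    (hG.comp_tendsto (hM.tendsto_graphPoint τ))

theorem IsFlatHypersurface.isBigO_comp_graphPoint (hM : IsFlatHypersurface P f)
    (hlead : HasLeadingTermsFst H m c d) {l : ℕ} (hc : c =O[𝓝[≠] 0] fun z => ‖z‖ ^ l) (τ : ℝ) :
    (fun z => H (graphPoint P f τ z, z)) =O[𝓝[≠] 0] fun z => P z ^ m * ‖z‖ ^ l := by
  have herr := ((hM.isBigO_sub_leading hlead.analyticAt_leading.continuousAt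
    hlead.isBigO_sub_leading τ).mono nhdsWithin_le_nhds).trans
      ((isBigO_refl (fun z => P z ^ m) (𝓝[≠] 0)).mul (hM.isFlat_profile l))
  simpa using herr.add (isBigO_mul_pow_smul (((hM.continuousAt_direction τ).isBigO_one ℝ).mono
    nhdsWithin_le_nhds) hc m)

theorem IsFlatHypersurface.isBigO_re_conormal_mul (hM : IsFlatHypersurface P f) {u : ℂ → ℂ}
    {g : ℂ → ℝ} (hu : u =O[𝓝[≠] 0] g) :
    (fun z => ((1 - I * tilt f z) * u z).re) =O[𝓝[≠] 0] g := by
  have htilt := hM.continuousAt_tilt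
  have hconormal : (fun z => 1 - I * (tilt f z : ℂ)) =O[𝓝[≠] 0] fun _ => (1 : ℝ) :=
    (ContinuousAt.tendsto (by fun_prop)).isBigO_one ℝ |>.mono nhdsWithin_le_nhds
  exact (IsBigO.of_norm_le fun _ => abs_re_le_norm _).trans
    (by simpa using (hconormal.mul hu).norm_left)

namespace IsTangentField

theorem isFlat_re_leading (hH : IsTangentField P f H) (hM : IsFlatHypersurface P f)
    (hlead : HasLeadingTermsFst H m c d) (τ : ℝ) :
    IsFlat fun z => ((1 - I * tilt f z) * (direction (tilt f z) τ ^ m * (c z).1)).re := by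
  intro n
  have hle : 𝓝[≠] (0 : ℂ) ≤ 𝓝 0 := nhdsWithin_le_nhds
  have hcont := hlead.analyticAt_leading.continuousAt
  have hP := hM.isFlat_profile n
  have hPm := isBigO_refl (fun z => P z ^ m) (𝓝[≠] 0)
  have hG := (hM.isBigO_sub_leading hcont hlead.isBigO_sub_leading τ).mono hle
  have herr : (fun z => P z ^ (m + 1)) =O[𝓝[≠] 0] fun z => P z ^ m * ‖z‖ ^ n := hPm.mul hP
  have hsize : (fun z => H (graphPoint P f τ z, z)) =O[𝓝[≠] 0] fun z => P z ^ m := by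
    simpa using hM.isBigO_comp_graphPoint hlead (l := 0)
      (by simpa using (hcont.isBigO_one ℝ).mono hle) τ
  have htangent := ((hH.isBigO_re_add_fderiv hM τ).mono hle).trans (hP.mul hsize.norm_left)
  have hfst := hM.isBigO_re_conormal_mul
    ((IsBigO.of_norm_le fun z => norm_fst_le _).trans (hG.trans herr).norm_left)
  have hderiv := isBigO_clm_apply (hM.isFlat_fderiv_profile n)
    ((IsBigO.of_norm_le fun z => norm_snd_le _).trans hsize.norm_left)
  refine isBigO_of_pow_mul_isBigO hM.profile_ne_zero (m := m) ?_
  refine (((htangent.sub hderiv).congr_right fun z => mul_comm _ _).sub hfst).congr_left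
    fun z => ?_
  simp only [Prod.fst_sub, Prod.smul_fst, smul_eq_mul]
  rw [add_sub_cancel_right, ← sub_re, ← re_ofReal_mul]
  congr 1
  push_cast
  ring

theorem isBigO_re_add_fderiv_leading (hH : IsTangentField P f H) (hM : IsFlatHypersurface P f)
    (hlead : HasLeadingTermsFst H m c d) (hA : ∀ᶠ z in 𝓝 0, (c z).1 = 0) {l : ℕ}
    (hB : (fun z => (c z).2) =O[𝓝[≠] 0] fun z => ‖z‖ ^ l) (τ : ℝ) :
    (fun z => P z * ((1 - I * tilt f z) * (direction (tilt f z) τ ^ (m + 1) * (d z).1)).re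
      + fderiv ℝ P z (direction (tilt f z) τ ^ m * (c z).2)) =O[𝓝[≠] 0]
      fun z => P z * ‖z‖ ^ l := by
  have hle : 𝓝[≠] (0 : ℂ) ≤ 𝓝 0 := nhdsWithin_le_nhds
  have hcl : c =O[𝓝[≠] 0] fun z => ‖z‖ ^ l :=
    ((isBigO_zero _ _).congr' ((hA.filter_mono hle).mono fun z hz => hz.symm) .rfl).prod_left hB
  have hsize := hM.isBigO_comp_graphPoint hlead hcl τ
  have hPm := isBigO_refl (fun z => P z ^ (m + 1)) (𝓝[≠] 0)
  have htangent := ((hH.isBigO_re_add_fderiv hM τ).mono hle).trans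
    ((isBigO_refl P _).mul hsize.norm_left)
  have hG₁ := (hM.isBigO_sub_leading (G := fun q => (H q).1) (D := fun z => (d z).1) (m := m + 1)
    hlead.analyticAt_next.continuousAt.fst (hlead.isBigO_sub_fst hA) τ).mono hle
  have hG₂ := (hM.isBigO_sub_leading hlead.analyticAt_leading.continuousAt
    hlead.isBigO_sub_leading τ).mono hle
  have hfst := hM.isBigO_re_conormal_mul (hG₁.trans (hPm.mul (hM.isFlat_profile l)))
  have hderiv := isBigO_clm_apply (hM.isFlat_fderiv_profile l)
    ((IsBigO.of_norm_le fun z => norm_snd_le _).trans hG₂.norm_left)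
  let g : ℂ → ℝ := fun z => P z ^ m * (P z * ‖z‖ ^ l)
  refine isBigO_of_pow_mul_isBigO hM.profile_ne_zero (m := m) ((((htangent.congr_right (g₂ := g)
    fun z => by ring).sub (hfst.congr_right (g₂ := g) fun z => by ring)).sub
    (hderiv.congr_right (g₂ := g) fun z => by ring)).congr_left fun z => ?_)
  have hscale : ((P z * direction (tilt f z) τ) ^ m • (c z).2)
      = (P z ^ m) • (direction (tilt f z) τ ^ m * (c z).2) := by
    rw [real_smul, smul_eq_mul, ofReal_pow]
    ring
  simp only [Prod.snd_sub, Prod.smul_snd, map_sub, hscale, map_smul]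
  rw [mul_add, ← mul_assoc, ← re_ofReal_mul, smul_eq_mul, smul_eq_mul, mul_sub, sub_re]
  have hpow : (1 - I * tilt f z) * ((P z * direction (tilt f z) τ) ^ (m + 1) * (d z).1)
      = (P z ^ m * P z : ℝ)
        * ((1 - I * tilt f z) * (direction (tilt f z) τ ^ (m + 1) * (d z).1)) := by
    push_cast
    ring
  rw [hpow]
  ring

end IsTangentField

end Restriction

section Coefficients

variable {ι : Type*} {l : Filter ι} {a g : ι → ℝ}

theorem isBigO_of_forall_sum_mul_pow {N : ℕ} {c : Fin N → ι → ℝ}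
    (h : ∀ τ : ℝ, (fun i => ∑ j, c j i * τ ^ (j : ℕ)) =O[l] g) (j : Fin N) : c j =O[l] g := by
  let V : Matrix (Fin N) (Fin N) ℝ := .vandermonde fun i => (i : ℕ)
  have hV : IsUnit V.det := isUnit_iff_ne_zero.2 <| Matrix.det_vandermonde_ne_zero_iff.2
    fun i j hij => Fin.ext (by exact_mod_cast hij)
  have hinv : c j = fun i => ∑ k, V⁻¹ j k * ∑ q, c q i * ((k : ℕ) : ℝ) ^ (q : ℕ) := by
    funext i
    have hmul : (V⁻¹.mulVec (V.mulVec fun q => c q i)) j = c j i := by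
      rw [Matrix.mulVec_mulVec, Matrix.nonsing_inv_mul V hV, Matrix.one_mulVec]
    simpa only [Matrix.mulVec, dotProduct, V, Matrix.vandermonde_apply, mul_comm (c _ i)]
      using hmul.symm
  rw [hinv]
  exact IsBigO.fun_sum fun k _ => (h (k : ℕ)).const_mul_left _

open Polynomial

theorem isBigO_re_coeff {N : ℕ} {p : ι → ℂ[X]} (hp : ∀ i, (p i).natDegree ≤ N)
    (h : ∀ τ : ℝ, (fun i => ((p i).eval (τ : ℂ)).re) =O[l] g) {j : ℕ} (hj : j ≤ N) :
    (fun i => ((p i).coeff j).re) =O[l] g := by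
  refine isBigO_of_forall_sum_mul_pow (N := N + 1) (c := fun j i => ((p i).coeff j).re)
    (fun τ => (h τ).congr_left fun i => ?_) ⟨j, Nat.lt_succ_of_le hj⟩
  rw [eval_eq_sum_range' (Nat.lt_succ_of_le (hp i)), re_sum, Finset.sum_range]
  exact Finset.sum_congr rfl fun k _ => by rw [← ofReal_pow, re_mul_ofReal]

theorem natDegree_linear_pow_le (x y : ℂ) (m : ℕ) : ((C x * X + C y) ^ m).natDegree ≤ m := by
  simpa using natDegree_pow_le_of_le m (natDegree_linear_le (a := x) (b := y))

theorem coeff_one_linear_sub_one_pow (x : ℂ) (m : ℕ) :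
    ((C x * X + C (-1)) ^ m).coeff 1 = -(-1) ^ m * (m * x) := by
  induction m with
  | zero => simp [coeff_one]
  | succ m ih =>
    rw [pow_succ, mul_coeff_one, ih, coeff_zero_eq_eval_zero]
    simp only [eval_pow, eval_add, eval_mul, eval_C, eval_X, coeff_add, coeff_C_mul, coeff_X_one,
      coeff_C_succ, coeff_X_zero, coeff_C_zero]
    push_cast
    ring

theorem coeff_self_linear_pow (x y : ℂ) (m : ℕ) : ((C x * X + C y) ^ m).coeff m = x ^ m := by
  have h := coeff_pow_of_natDegree_le (m := m) (natDegree_linear_le (a := x) (b := y))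
  simpa using h

theorem isBigO_of_re_direction_pow_mul {m : ℕ} (hm : m ≠ 0) (ha : a =O[l] fun _ => (1 : ℝ))
    {Y : ι → ℂ} (h : ∀ τ, (fun i => (direction (a i) τ ^ m * Y i).re) =O[l] g) : Y =O[l] g := by
  have hcoeff {j : ℕ} (hj : j ≤ m) := isBigO_re_coeff (l := l) (g := g)
    (p := fun i => (C (I - a i) * X + C (-1)) ^ m * C (Y i))
    (fun i => (natDegree_mul_C_le _ _).trans (natDegree_linear_pow_le _ _ m))
    (fun τ => (h τ).congr_left fun i => by simp [direction, sub_eq_add_neg]) hj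
  have hsign (u : ι → ℂ) (hu : (fun i => ((-1) ^ m * u i).re) =O[l] g) :
      (fun i => (u i).re) =O[l] g := by
    rcases neg_one_pow_eq_or ℂ m with hneg | hneg <;> simpa [hneg] using hu
  have hre : (fun i => (Y i).re) =O[l] g := hsign _ <| (hcoeff m.zero_le).congr_left fun i => by
    rw [coeff_mul_C, coeff_zero_eq_eval_zero]
    simp
  have hone : (fun i => -m * ((I - a i) * Y i).re) =O[l] g := by
    refine (hsign (fun i => (-m : ℝ) * ((I - a i) * Y i))
      ((hcoeff (Nat.one_le_iff_ne_zero.2 hm)).congr_left fun i => ?_)).congr_left fun i => ?_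
    · rw [coeff_mul_C, coeff_one_linear_sub_one_pow]
      push_cast
      ring_nf
    · rw [re_ofReal_mul]
  have hlin : (fun i => ((I - a i) * Y i).re) =O[l] g :=
    (hone.const_mul_left (-m : ℝ)⁻¹).congr_left fun i =>
      inv_mul_cancel_left₀ (neg_ne_zero.2 (Nat.cast_ne_zero.2 hm)) _
  have him : (fun i => (Y i).im) =O[l] g := by
    have hmul : (fun i => a i * (Y i).re) =O[l] g := by simpa using ha.mul hre
    exact (hlin.add hmul).neg_left.congr_left fun i => by simp
  exact (IsBigO.of_norm_le fun i => norm_le_abs_re_add_abs_im (Y i)).trans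
    (hre.norm_left.add him.norm_left)

theorem isBigO_re_mul_of_re_direction_pow_mul {m : ℕ} {Z Y : ι → ℂ}
    (h : ∀ τ, (fun i => (direction (a i) τ ^ m * (direction (a i) τ * Z i + Y i)).re) =O[l] g) :
    (fun i => ((I - a i) ^ (m + 1) * Z i).re) =O[l] g := by
  have hdeg (i : ι) :
      ((C (I - a i) * X + C (-1)) * C (Z i) + C (Y i)).natDegree ≤ 1 :=
    natDegree_add_le_of_degree_le ((natDegree_mul_C_le _ _).trans natDegree_linear_le)
      ((natDegree_C _).trans_le zero_le_one)
  refine (isBigO_re_coeff (N := m + 1)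
    (p := fun i => (C (I - a i) * X + C (-1)) ^ m
      * ((C (I - a i) * X + C (-1)) * C (Z i) + C (Y i)))
    (fun i => natDegree_mul_le_of_le (natDegree_linear_pow_le _ _ m) (hdeg i))
    (fun τ => (h τ).congr_left fun i => by simp [direction, sub_eq_add_neg]) le_rfl).congr_left
    fun i => ?_
  rw [coeff_mul_add_eq_of_natDegree_le (natDegree_linear_pow_le _ _ m) (hdeg i),
    coeff_self_linear_pow, pow_succ, mul_assoc]
  congr 2
  simp [coeff_one]

end Coefficients

section AnalyticOrder

variable {k v : ℂ → ℂ} {n : ℕ}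

theorem tendsto_ofReal_mul_nhdsNE_zero {ω : ℂ} (hω : ω ≠ 0) :
    Tendsto (fun ρ : ℝ => (ρ : ℂ) * ω) (𝓝[>] 0) (𝓝[≠] 0) := by
  refine tendsto_nhdsWithin_iff.2 ⟨?_, ?_⟩
  · exact (Continuous.tendsto' (by fun_prop) _ _ (by simp)).mono_left nhdsWithin_le_nhds
  · filter_upwards [self_mem_nhdsWithin] with ρ hρ
    exact mul_ne_zero (ofReal_ne_zero.2 (ne_of_gt hρ)) hω

-- On the ray where `z ^ j * v 0` is positive, the real part has exact order `j`.
theorem le_of_re_pow_mul_isBigO {j : ℕ} (hj : j ≠ 0) (hv : ContinuousAt v 0) (hv0 : v 0 ≠ 0)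
    (h : (fun z => (z ^ j * v z).re) =O[𝓝[≠] 0] fun z => ‖z‖ ^ n) : n ≤ j := by
  by_contra! hjn
  obtain ⟨i, rfl⟩ : ∃ i, n = j + (i + 1) := ⟨n - j - 1, by lia⟩
  obtain ⟨ω, hω, hωv⟩ := exists_norm_eq_one_pow_mul_eq_norm hj hv0
  have hray := tendsto_ofReal_mul_nhdsNE_zero (norm_ne_zero_iff.1 (by simp [hω]) : ω ≠ 0)
  have hO : (fun ρ : ℝ => ρ ^ j * (ω ^ j * v (ρ * ω)).re) =O[𝓝[>] 0]
      fun ρ => ρ ^ j * ρ ^ (i + 1) := by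
    refine ((h.comp_tendsto hray).congr_left fun ρ => ?_).trans (isBigO_of_le _ fun ρ => ?_)
    · simp only [Function.comp_apply, ← re_ofReal_mul, ofReal_pow]
      ring_nf
    · simp [hω, pow_add]
  have hρ : ∀ᶠ ρ : ℝ in 𝓝[>] 0, ρ ≠ 0 := eventually_mem_nhdsWithin.mono fun ρ hρ => ne_of_gt hρ
  have hsmall := (isBigO_of_pow_mul_isBigO hρ hO).trans_tendsto
    ((Continuous.tendsto' (by fun_prop) 0 0 (by simp)).mono_left nhdsWithin_le_nhds)
  have hlim : Tendsto (fun ρ : ℝ => (ω ^ j * v (ρ * ω)).re) (𝓝[>] 0) (𝓝 (ω ^ j * v 0).re) :=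
    (continuous_re.tendsto _).comp
      ((hv.tendsto.comp (hray.mono_right nhdsWithin_le_nhds)).const_mul _)
  have hzero := tendsto_nhds_unique hlim hsmall
  rw [hωv, ofReal_re] at hzero
  exact hv0 (norm_eq_zero.1 hzero)

theorem exists_eventually_eq_pow_mul (hk : AnalyticAt ℂ k 0) (hne : ¬ ∀ᶠ z in 𝓝 0, k z = 0) :
    ∃ j u, AnalyticAt ℂ u 0 ∧ u 0 ≠ 0 ∧ ∀ᶠ z in 𝓝 0, k z = z ^ j * u z := by
  simpa using hk.exists_eventuallyEq_pow_smul_nonzero_iff.2 hne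

theorem exists_eventually_eq_pow_mul_of_re_mul (hk : AnalyticAt ℂ k 0) (hk0 : k 0 = 0)
    (hne : ¬ ∀ᶠ z in 𝓝 0, k z = 0) (hv : ContinuousAt v 0) (hv0 : v 0 ≠ 0) :
    ∃ j u, AnalyticAt ℂ u 0 ∧ (∀ᶠ z in 𝓝 0, k z = z ^ j * u z) ∧
      ∀ n, (fun z => (v z * k z).re) =O[𝓝[≠] 0] (fun z => ‖z‖ ^ n) → n ≤ j := by
  obtain ⟨j, u, hu, hu0, hku⟩ := exists_eventually_eq_pow_mul hk hne
  have hj : j ≠ 0 := by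
    rintro rfl
    exact hu0 (by simpa [hk0] using hku.self_of_nhds.symm)
  refine ⟨j, u, hu, hku, fun n h => le_of_re_pow_mul_isBigO hj (hv.mul hu.continuousAt)
    (mul_ne_zero hv0 hu0) (h.congr' ?_ .rfl)⟩
  filter_upwards [hku.filter_mono nhdsWithin_le_nhds] with z hz
  rw [hz, mul_left_comm, Pi.mul_apply]

theorem isBigO_of_re_mul_isBigO (hk : AnalyticAt ℂ k 0) (hk0 : k 0 = 0) (hv : ContinuousAt v 0)
    (hv0 : v 0 ≠ 0) (h : (fun z => (v z * k z).re) =O[𝓝[≠] 0] fun z => ‖z‖ ^ n) :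
    k =O[𝓝 0] fun z => ‖z‖ ^ n := by
  by_cases hne : ∀ᶠ z in 𝓝 0, k z = 0
  · exact (isBigO_zero _ _).congr' (hne.mono fun z hz => hz.symm) .rfl
  obtain ⟨j, u, hu, hku, hle⟩ := exists_eventually_eq_pow_mul_of_re_mul hk hk0 hne hv hv0
  obtain ⟨i, rfl⟩ := Nat.exists_eq_add_of_le (hle n h)
  have hcont : ContinuousAt (fun z => z ^ i * u z) 0 := (by fun_prop : ContinuousAt _ _).mul
    hu.continuousAt
  have hpow : (fun z => z ^ n * (z ^ i * u z)) =O[𝓝 0] fun z => z ^ n := by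
    simpa using (isBigO_refl (fun z : ℂ => z ^ n) (𝓝 0)).mul (hcont.isBigO_one ℂ)
  simpa using (hpow.congr' (hku.mono fun z hz => by rw [hz, pow_add, mul_assoc]) .rfl).norm_right

theorem IsFlat.eventually_eq_zero_of_re_mul (h : IsFlat fun z => (v z * k z).re)
    (hk : AnalyticAt ℂ k 0) (hk0 : k 0 = 0) (hv : ContinuousAt v 0) (hv0 : v 0 ≠ 0) :
    ∀ᶠ z in 𝓝 0, k z = 0 := by
  by_contra hne
  obtain ⟨j, u, -, -, hle⟩ := exists_eventually_eq_pow_mul_of_re_mul hk hk0 hne hv hv0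
  exact (hle (j + 1) (h (j + 1))).not_gt j.lt_succ_self

end AnalyticOrder

section LeadingCoefficients

variable {P : ℂ → ℝ} {f : ℂ → ℝ → ℝ} {H : ℂ × ℂ → ℂ × ℂ} {m l : ℕ} {c d : ℂ → ℂ × ℂ}
  {u : ℂ → ℂ}

theorem one_sub_I_mul_ofReal_ne_zero (x : ℝ) : 1 - I * (x : ℂ) ≠ 0 := fun h => by
  simpa using congrArg re h

theorem I_sub_ofReal_ne_zero (x : ℝ) : I - (x : ℂ) ≠ 0 := fun h => by
  simpa using congrArg im h

theorem direction_zero (a : ℝ) : direction a 0 = -1 := by simp [direction]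

theorem direction_ne_zero (a τ : ℝ) : direction a τ ≠ 0 := by
  intro h
  obtain rfl : τ = 0 := by simpa [direction] using congrArg im h
  simp [direction_zero] at h

theorem eq_zero_of_re_direction_pow_mul (hm : m ≠ 0) {a : ℝ} {y : ℂ}
    (h : ∀ τ, (direction a τ ^ m * y).re = 0) : y = 0 := by
  have hy : (fun _ : Unit => y) =O[⊤] fun _ => (0 : ℝ) :=
    isBigO_of_re_direction_pow_mul hm (isBigO_const_const a one_ne_zero ⊤) fun τ => by
      simpa only [h τ] using isBigO_zero _ _
  exact eventually_top.1 (isBigO_zero_right_iff.1 hy) ()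

theorem isBigO_norm_pow_of_eq_pow_mul {b : ℂ → ℂ} (hb : ∀ᶠ z in 𝓝 0, b z = z ^ l * u z)
    (hu : ContinuousAt u 0) : b =O[𝓝[≠] 0] fun z => ‖z‖ ^ l := by
  have hmul : (fun z => z ^ l * u z) =O[𝓝 0] fun z => z ^ l := by
    simpa using (isBigO_refl (fun z : ℂ => z ^ l) (𝓝 0)).mul (hu.isBigO_one ℂ)
  simpa using ((hmul.congr' (hb.mono fun z hz => hz.symm) .rfl).mono
    nhdsWithin_le_nhds).norm_right

theorem IsFlatHypersurface.continuousAt_re_conormal_mul (hM : IsFlatHypersurface P f)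
    (τ : ℝ) (n : ℕ) (hu : ContinuousAt u 0) :
    ContinuousAt (fun z => ((1 - I * tilt f z) * (direction (tilt f z) τ ^ n * u z)).re) 0 := by
  have htilt := hM.continuousAt_tilt
  have hdir := hM.continuousAt_direction τ
  fun_prop

theorem IsFlatHypersurface.re_eq_zero_of_fderiv_mul_isBigO (hM : IsFlatHypersurface P f)
    (hu : ContinuousAt u 0) (h : (fun z => fderiv ℝ P z (z * u z)) =O[𝓝[≠] 0] P) : (u 0).re = 0 :=
  _root_.re_eq_zero_of_fderiv_mul_isBigO
    ((eventually_differentiableAt hM.contDiffAt_profile).filter_mono nhdsWithin_le_nhds)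
    hM.profile_pos hM.isFlat_profile hu h

namespace IsTangentField

theorem fst_leading_eventually_eq_zero (hH : IsTangentField P f H) (hM : IsFlatHypersurface P f)
    (hlead : HasLeadingTermsFst H m c d) (hH0 : (H 0).1 = 0) : ∀ᶠ z in 𝓝 0, (c z).1 = 0 := by
  have han : AnalyticAt ℂ (fun z => (c z).1) 0 := analyticAt_fst.comp hlead.analyticAt_leading
  have hzero : (c 0).1 = 0 := by
    rcases eq_or_ne m 0 with rfl | hm
    · rwa [← hlead.eventually_eq_of_order_zero.self_of_nhds]
    · refine (mul_eq_zero.1 (eq_zero_of_re_direction_pow_mul hm (a := tilt f 0)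
        fun τ => ?_)).resolve_left (one_sub_I_mul_ofReal_ne_zero (tilt f 0))
      rw [mul_left_comm]
      exact eq_zero_of_continuousAt_of_isBigO
        (hM.continuousAt_re_conormal_mul τ m han.continuousAt)
        (by simpa using hH.isFlat_re_leading hM hlead τ 1)
  have htilt := hM.continuousAt_tilt
  refine IsFlat.eventually_eq_zero_of_re_mul (v := fun z => (1 - I * tilt f z) * (-1) ^ m) ?_
    han hzero (by fun_prop) (mul_ne_zero (one_sub_I_mul_ofReal_ne_zero _) (by simp))
  simpa only [direction_zero, mul_assoc] using hH.isFlat_re_leading hM hlead 0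

theorem isBigO_mul_add_fderiv_of_snd_leading_eq (hH : IsTangentField P f H)
    (hM : IsFlatHypersurface P f) (hlead : HasLeadingTermsFst H m c d)
    (hA : ∀ᶠ z in 𝓝 0, (c z).1 = 0) (hB : ∀ᶠ z in 𝓝 0, (c z).2 = z ^ l * u z)
    (hu : ContinuousAt u 0) (τ : ℝ) :
    (fun z => P z * ((1 - I * tilt f z) * (direction (tilt f z) τ ^ (m + 1) * (d z).1)).re
      + fderiv ℝ P z (z ^ l * (direction (tilt f z) τ ^ m * u z))) =O[𝓝[≠] 0]
      fun z => P z * ‖z‖ ^ l := by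
  refine (hH.isBigO_re_add_fderiv_leading hM hlead hA
    (isBigO_norm_pow_of_eq_pow_mul hB hu) τ).congr' ?_ .rfl
  filter_upwards [hB.filter_mono nhdsWithin_le_nhds] with z hz
  rw [hz, mul_left_comm (direction (tilt f z) τ ^ m)]

theorem isBigO_re_direction_pow_mul_add (hH : IsTangentField P f H) (hM : IsFlatHypersurface P f)
    (hlead : HasLeadingTermsFst H m c d) (hA : ∀ᶠ z in 𝓝 0, (c z).1 = 0)
    (hB : (fun z => (c z).2) =O[𝓝[≠] 0] fun z => ‖z‖ ^ l) (τ : ℝ) :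
    (fun z => (direction (tilt f z) τ ^ m * (direction (tilt f z) τ
      * (P z * ((1 - I * tilt f z) * (d z).1)) + 2 * (wDeriv P z * (c z).2))).re) =O[𝓝[≠] 0]
      fun z => P z * ‖z‖ ^ l := by
  refine (hH.isBigO_re_add_fderiv_leading hM hlead hA hB τ).congr_left fun z => ?_
  rw [← mul_div_cancel₀ (fderiv ℝ P z _) two_ne_zero, ← re_mul_wDeriv, ← re_ofReal_mul,
    ← re_ofReal_mul, ← add_re]
  congr 1
  push_cast
  ring

theorem isBigO_re_next (hH : IsTangentField P f H) (hM : IsFlatHypersurface P f)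
    (hlead : HasLeadingTermsFst H m c d) (hA : ∀ᶠ z in 𝓝 0, (c z).1 = 0)
    (hB : (fun z => (c z).2) =O[𝓝[≠] 0] fun z => ‖z‖ ^ l) :
    (fun z => ((I - tilt f z) ^ (m + 1) * (1 - I * tilt f z) * (d z).1).re) =O[𝓝[≠] 0]
      fun z => ‖z‖ ^ l := by
  refine isBigO_of_pow_mul_isBigO hM.profile_ne_zero (m := 1) ?_
  simp only [pow_one]
  refine (isBigO_re_mul_of_re_direction_pow_mul
    (hH.isBigO_re_direction_pow_mul_add hM hlead hA hB)).congr_left fun z => ?_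
  rw [← re_ofReal_mul]
  ring_nf

theorem isBigO_fderiv_leading (hH : IsTangentField P f H) (hM : IsFlatHypersurface P f)
    (hlead : HasLeadingTermsFst H m c d) (hA : ∀ᶠ z in 𝓝 0, (c z).1 = 0) (τ : ℝ) :
    (fun z => fderiv ℝ P z (direction (tilt f z) τ ^ m * (c z).2)) =O[𝓝[≠] 0] P := by
  have hB : (fun z => (c z).2) =O[𝓝[≠] 0] fun z => ‖z‖ ^ 0 := by
    simpa using (hlead.analyticAt_leading.continuousAt.snd.isBigO_one ℝ).mono nhdsWithin_le_nhds
  have hfst : (fun z => ((1 - I * tilt f z) * (direction (tilt f z) τ ^ (m + 1) * (d z).1)).re)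
      =O[𝓝[≠] 0] fun _ => (1 : ℝ) :=
    ((hM.continuousAt_re_conormal_mul τ (m + 1) hlead.analyticAt_next.continuousAt.fst).isBigO_one
      ℝ).mono nhdsWithin_le_nhds
  simpa using (hH.isBigO_re_add_fderiv_leading hM hlead hA hB τ).sub
    ((isBigO_refl P _).mul hfst)

theorem isBigO_wDeriv_mul_leading (hH : IsTangentField P f H) (hM : IsFlatHypersurface P f)
    (hlead : HasLeadingTermsFst H m c d) (hA : ∀ᶠ z in 𝓝 0, (c z).1 = 0) (hm : m ≠ 0) :
    (fun z => (c z).2 * wDeriv P z) =O[𝓝[≠] 0] P := by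
  refine isBigO_of_re_direction_pow_mul (a := tilt f) hm
    ((hM.continuousAt_tilt.isBigO_one ℝ).mono nhdsWithin_le_nhds) fun τ => ?_
  refine ((hH.isBigO_fderiv_leading hM hlead hA τ).const_mul_left 2⁻¹).congr_left fun z => ?_
  rw [← mul_assoc, re_mul_wDeriv, div_eq_inv_mul]

theorem two_le_of_snd_leading_eq (hH : IsTangentField P f H) (hM : IsFlatHypersurface P f)
    (hlead : HasLeadingTermsFst H m c d) (hA : ∀ᶠ z in 𝓝 0, (c z).1 = 0) (hm : m ≠ 0)
    (hB : ∀ᶠ z in 𝓝 0, (c z).2 = z ^ l * u z) (hu : ContinuousAt u 0) (hu0 : u 0 ≠ 0) :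
    2 ≤ l := by
  by_contra! hl
  have hpow (z : ℂ) : z ^ (1 - l) * z ^ l = z := by
    rw [← pow_add, Nat.sub_add_cancel (by lia), pow_one]
  have hbound : (fun z : ℂ => z ^ (1 - l) * (starRingEnd ℂ) (u 0)) =O[𝓝[≠] 0] fun _ => (1 : ℝ) :=
    (ContinuousAt.tendsto (by fun_prop)).isBigO_one ℝ |>.mono nhdsWithin_le_nhds
  have hderiv : (fun z => fderiv ℝ P z (z * ((starRingEnd ℂ) (u 0) * u z))) =O[𝓝[≠] 0] P := by
    have hmul := (hbound.mul (hH.isBigO_wDeriv_mul_leading hM hlead hA hm)).const_mul_left 2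
    refine ((IsBigO.of_norm_le fun z => abs_re_le_norm _).trans hmul.norm_left).congr' ?_ (by simp)
    filter_upwards [hB.filter_mono nhdsWithin_le_nhds] with z hz
    rw [← mul_assoc _ _ (wDeriv P z), ← ofReal_ofNat, re_ofReal_mul, re_mul_wDeriv, hz,
      mul_div_cancel₀ _ two_ne_zero]
    congr 1
    linear_combination ((starRingEnd ℂ) (u 0) * u z) * hpow z
  have hre := hM.re_eq_zero_of_fderiv_mul_isBigO (u := fun z => (starRingEnd ℂ) (u 0) * u z)
    (by fun_prop) hderiv
  rw [← normSq_eq_conj_mul_self, ofReal_re] at hre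
  exact hu0 (normSq_eq_zero.1 hre)

theorem re_eq_zero_of_snd_leading_eq (hH : IsTangentField P f H) (hM : IsFlatHypersurface P f)
    (hlead : HasLeadingTermsFst H m c d) (hA : ∀ᶠ z in 𝓝 0, (c z).1 = 0)
    (hB : ∀ᶠ z in 𝓝 0, (c z).2 = z * u z) (hu : ContinuousAt u 0) : (u 0).re = 0 := by
  have hre := hM.re_eq_zero_of_fderiv_mul_isBigO (u := fun z => (-1) ^ m * u z) (by fun_prop)
    ((hH.isBigO_fderiv_leading hM hlead hA 0).congr' ?_ .rfl)
  · rcases neg_one_pow_eq_or ℂ m with hsign | hsign <;> simpa [hsign] using hre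
  · filter_upwards [hB.filter_mono nhdsWithin_le_nhds] with z hz
    rw [hz, direction_zero, mul_left_comm]

end IsTangentField

namespace IsFlatHypersurface

theorem not_isBigO_mul_add_fderiv (hM : IsFlatHypersurface P f) (hl : 2 ≤ l)
    (hu : ContinuousAt u 0) (hu0 : u 0 ≠ 0) {e : ℂ → ℝ} (he : ∀ᶠ z in 𝓝[≠] 0, 0 ≤ e z) :
    ¬ (fun z => P z * e z + fderiv ℝ P z (z ^ l * u z)) =O[𝓝[≠] 0] fun z => P z * ‖z‖ ^ l := by
  intro h
  obtain ⟨C, hC⟩ := h.bound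
  refine not_eventually_fderiv_pow_mul_le (eventually_differentiableAt hM.contDiffAt_profile)
    hM.profile_zero hM.profile_pos hl hu hu0 C ?_
  filter_upwards [hC, he, hM.profile_pos] with z hz hez hPz
  rw [norm_mul, norm_pow, norm_norm, Real.norm_of_nonneg hPz.le] at hz
  have := (le_abs_self _).trans hz
  have := mul_nonneg hPz.le hez
  linarith

theorem eq_zero_of_isBigO_mul_add_fderiv (hM : IsFlatHypersurface P f) (hl : 2 ≤ l)
    (hu : ContinuousAt u 0) (hu0 : u 0 ≠ 0) {e : ℂ → ℝ} (he : ContinuousAt e 0)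
    (h : (fun z => P z * e z + fderiv ℝ P z (z ^ l * u z)) =O[𝓝[≠] 0] fun z => P z * ‖z‖ ^ l) :
    e 0 = 0 := by
  rcases lt_trichotomy (e 0) 0 with hneg | hzero | hpos
  · refine (hM.not_isBigO_mul_add_fderiv hl hu.neg (neg_ne_zero.2 hu0) (e := -e) ?_ ?_).elim
    · exact ((he.eventually_lt_const hneg).filter_mono nhdsWithin_le_nhds).mono fun z hz =>
        neg_nonneg.2 hz.le
    · exact h.neg_left.congr_left fun z => by
        rw [Pi.neg_apply, Pi.neg_apply, mul_neg, mul_neg, map_neg, neg_add]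
  · exact hzero
  · exact (hM.not_isBigO_mul_add_fderiv hl hu hu0 (((he.eventually_const_lt hpos).filter_mono
      nhdsWithin_le_nhds).mono fun z hz => hz.le) h).elim

end IsFlatHypersurface

namespace IsTangentField

theorem next_fst_eq_zero_of_two_le (hH : IsTangentField P f H)
    (hM : IsFlatHypersurface P f) (hlead : HasLeadingTermsFst H m c d)
    (hA : ∀ᶠ z in 𝓝 0, (c z).1 = 0) (hB : ∀ᶠ z in 𝓝 0, (c z).2 = z ^ l * u z)
    (hu : ContinuousAt u 0) (hu0 : u 0 ≠ 0) (hl : 2 ≤ l) : (d 0).1 = 0 := by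
  refine (mul_eq_zero.1 (eq_zero_of_re_direction_pow_mul m.succ_ne_zero (a := tilt f 0)
    fun τ => ?_)).resolve_left (one_sub_I_mul_ofReal_ne_zero (tilt f 0))
  rw [mul_left_comm]
  exact hM.eq_zero_of_isBigO_mul_add_fderiv hl (((hM.continuousAt_direction τ).pow m).mul hu)
    (mul_ne_zero (pow_ne_zero m (direction_ne_zero _ τ)) hu0)
    (hM.continuousAt_re_conormal_mul τ (m + 1) hlead.analyticAt_next.continuousAt.fst)
    (hH.isBigO_mul_add_fderiv_of_snd_leading_eq hM hlead hA hB hu τ)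

theorem lt_two_of_snd_leading_eq (hH : IsTangentField P f H)
    (hM : IsFlatHypersurface P f) (hlead : HasLeadingTermsFst H m c d)
    (hA : ∀ᶠ z in 𝓝 0, (c z).1 = 0) (hB : ∀ᶠ z in 𝓝 0, (c z).2 = z ^ l * u z)
    (hu : ContinuousAt u 0) (hu0 : u 0 ≠ 0) : l < 2 := by
  by_contra! hl
  have htilt := hM.continuousAt_tilt
  have hv0 : (I - tilt f 0) ^ (m + 1) * (1 - I * tilt f 0) ≠ 0 :=
    mul_ne_zero (pow_ne_zero _ (I_sub_ofReal_ne_zero _)) (one_sub_I_mul_ofReal_ne_zero _)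
  have hnext : (fun z => (d z).1) =O[𝓝 0] fun z => ‖z‖ ^ l :=
    isBigO_of_re_mul_isBigO (v := fun z => (I - tilt f z) ^ (m + 1) * (1 - I * tilt f z))
      (analyticAt_fst.comp hlead.analyticAt_next)
      (hH.next_fst_eq_zero_of_two_le hM hlead hA hB hu hu0 hl) (by fun_prop) hv0
      (hH.isBigO_re_next hM hlead hA (isBigO_norm_pow_of_eq_pow_mul hB hu))
  have hfst : (fun z => ((1 - I * tilt f z) * (direction (tilt f z) 0 ^ (m + 1) * (d z).1)).re)
      =O[𝓝[≠] 0] fun z => ‖z‖ ^ l :=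
    hM.isBigO_re_conormal_mul <| by
      simpa only [direction_zero] using (hnext.mono nhdsWithin_le_nhds).const_mul_left _
  refine hM.not_isBigO_mul_add_fderiv hl (((hM.continuousAt_direction 0).pow m).mul hu)
    (mul_ne_zero (pow_ne_zero m (direction_ne_zero _ 0)) hu0) (e := 0) (.of_forall fun _ => le_rfl)
    (((hH.isBigO_mul_add_fderiv_of_snd_leading_eq hM hlead hA hB hu 0).sub
      ((isBigO_refl P _).mul hfst)).congr_left fun z => ?_)
  simp

theorem fst_eq_zero_and_snd_eq_mul (hH : IsTangentField P f H) (hM : IsFlatHypersurface P f)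
    (hlead : HasLeadingTermsFst H m c d) (hH0 : H 0 = 0) :
    (∀ᶠ z in 𝓝 0, (H (0, z)).1 = 0) ∧ ∃ u : ℂ → ℂ, AnalyticAt ℂ u 0 ∧ u 0 ≠ 0 ∧ (u 0).re = 0 ∧
      ∀ᶠ z in 𝓝 0, (H (0, z)).2 = z * u z := by
  have hA := hH.fst_leading_eventually_eq_zero hM hlead (by simp [hH0])
  obtain ⟨l, u, hu, hu0, hB⟩ := exists_eventually_eq_pow_mul
    (analyticAt_snd.comp hlead.analyticAt_leading) fun hzero =>
      hlead.not_eventually_eq_zero ((hA.and hzero).mono fun z hz => Prod.ext hz.1 hz.2)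
  have hl : l < 2 := hH.lt_two_of_snd_leading_eq hM hlead hA hB hu.continuousAt hu0
  obtain rfl : m = 0 := by
    by_contra hm
    exact hl.not_ge (hH.two_le_of_snd_leading_eq hM hlead hA hm hB hu.continuousAt hu0)
  have hHc := hlead.eventually_eq_of_order_zero
  obtain rfl : l = 1 := by
    by_contra hl1
    obtain rfl : l = 0 := by lia
    have hc0 : c 0 = 0 := by rw [← hHc.self_of_nhds]; exact hH0
    have hB0 : (c 0).2 = 0 ^ 0 * u 0 := hB.self_of_nhds
    exact hu0 (by simpa [hc0] using hB0.symm)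
  simp only [pow_one] at hB
  refine ⟨(hHc.and hA).mono fun z hz => by rw [hz.1, hz.2], u, hu, hu0,
    hH.re_eq_zero_of_snd_leading_eq hM hlead hA hB hu.continuousAt,
    (hHc.and hB).mono fun z hz => by rw [hz.1]; exact hz.2⟩

end IsTangentField

end LeadingCoefficients

section Germs

variable {P : ℂ → ℝ} {f : ℂ → ℝ → ℝ} {r s : ℝ}

theorem IsFlatHypersurface.of_ball (hr : 0 < r) (hP : ContDiffOn ℝ 2 P (ball 0 r))
    (hPpos : ∀ z ∈ ball 0 r, z ≠ 0 → 0 < P z) (hPflat : IsFlat P)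
    (hf : ContDiffOn ℝ 2 (Function.uncurry f) (ball 0 r ×ˢ Ioo (-r) r))
    (hf0 : ∀ z ∈ ball 0 r, f z 0 = 0) : IsFlatHypersurface P f where
  contDiffAt_profile := hP.contDiffAt (ball_mem_nhds 0 hr)
  profile_pos := eventually_nhdsWithin_iff.2 (eventually_of_mem (ball_mem_nhds 0 hr) hPpos)
  isFlat_profile := hPflat
  contDiffAt_remainder := hf.contDiffAt
    (prod_mem_nhds (ball_mem_nhds 0 hr) (Ioo_mem_nhds (neg_lt_zero.2 hr) hr))
  remainder_zero := eventually_of_mem (ball_mem_nhds 0 hr) hf0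

theorem IsTangentField.of_ball {H : ℂ × ℂ → ℂ × ℂ} (hr : 0 < r) (hs : 0 < s)
    (h : ∀ q ∈ ball (0 : ℂ × ℂ) s, q.1 ∈ ball 0 r → q.2 ∈ ball 0 r →
      q.1.re + P q.2 + f q.2 q.1.im = 0 →
      ((H q).1 * wDeriv (fun w => w.re + P q.2 + f q.2 w.im) q.1
        + (H q).2 * wDeriv (fun w => q.1.re + P w + f w q.1.im) q.2).re = 0) :
    IsTangentField P f H := by
  filter_upwards [ball_mem_nhds (0 : ℂ × ℂ) hs, ball_mem_nhds (0 : ℂ × ℂ) hr] with q hqs hqr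
  rw [Prod.zero_eq_mk, ← ball_prod_same] at hqr
  exact h q hqs hqr.1 hqr.2

end Germs

theorem isBigO_mul_sub_mul {u : ℂ → ℂ} (hu : DifferentiableAt ℂ u 0) :
    (fun z => z * u z - u 0 * z) =O[𝓝 0] fun z => ‖z‖ ^ 2 := by
  have hsub := ((isBigO_refl (fun z : ℂ => z) (𝓝 0)).mul hu.isBigO_sub).norm_right
  refine hsub.congr (fun z => by ring) fun z => ?_
  rw [sub_zero, norm_mul, sq]

theorem stmt_15_general {P : ℂ → ℝ} {f : ℂ → ℝ → ℝ} {H : ℂ × ℂ → ℂ × ℂ} {s : ℝ}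
    (hM : IsFlatHypersurface P f) (hH : IsTangentField P f H)
    (hd : DifferentiableOn ℂ H (ball 0 s)) (hH0 : H 0 = 0) (hne : ∃ q ∈ ball 0 s, H q ≠ 0) :
    (∀ᶠ z in 𝓝 0, (H (0, z)).1 = 0) ∧ ∃ β : ℝ, β ≠ 0 ∧
      (fun z => (H (0, z)).2 - I * β * z) =O[𝓝 0] fun z => ‖z‖ ^ 2 := by
  obtain ⟨m, c, d, hlead⟩ := exists_hasLeadingTermsFst hd hne
  obtain ⟨hfst, u, hu, hu0, hre, hsnd⟩ := hH.fst_eq_zero_and_snd_eq_mul hM hlead hH0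
  have hβ : I * (u 0).im = u 0 := by apply Complex.ext <;> simp [hre]
  refine ⟨hfst, (u 0).im, fun h => hu0 (by simpa [h] using hβ.symm), ?_⟩
  refine (isBigO_mul_sub_mul hu.differentiableAt).congr' (hsnd.mono fun z hz => ?_) .rfl
  simp only [hz, hβ]

/-- Claim 4.1 of the paper: for a non-trivial holomorphic vector field `H = h₁∂₁ + h₂∂₂`
vanishing at `0` and tangent to `M = {Re z₁ + P(z₂) + f(z₂, Im z₁) = 0}` with `P > 0` off `0`
and `P` flat at `0`, one has `h₁(0,z₂) ≡ 0` and `h₂(0,z₂) = iβz₂ + O(z₂²)` with `β ∈ ℝ*`. -/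
theorem stmt_15
    (r s : ℝ) (hr : 0 < r) (hs : 0 < s)
    (P : ℂ → ℝ) (f : ℂ → ℝ → ℝ)
    (hPsm : ContDiffOn ℝ (⊤ : ℕ∞) P (ball (0:ℂ) r))
    (hP0 : P 0 = 0)
    (hPpos : ∀ z ∈ ball (0:ℂ) r, z ≠ 0 → 0 < P z)
    (hPflat : ∀ n : ℕ, P =o[nhds (0:ℂ)] fun z => ‖z‖ ^ n)
    (hfan : AnalyticOnNhd ℝ (fun q : ℂ × ℝ => f q.1 q.2) (ball (0:ℂ) r ×ˢ Set.Ioo (-r) r))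
    (hf0 : ∀ z ∈ ball (0:ℂ) r, f z 0 = 0)
    (h₁ h₂ : ℂ × ℂ → ℂ)
    (hh₁ : DifferentiableOn ℂ h₁ (ball (0 : ℂ × ℂ) s))
    (hh₂ : DifferentiableOn ℂ h₂ (ball (0 : ℂ × ℂ) s))
    (hv₁ : h₁ 0 = 0) (hv₂ : h₂ 0 = 0)
    (hne : ∃ z ∈ ball (0 : ℂ × ℂ) s, h₁ z ≠ 0 ∨ h₂ z ≠ 0)
    (htang : ∀ z : ℂ × ℂ, z ∈ ball (0 : ℂ × ℂ) s → z.1 ∈ ball (0:ℂ) r → z.2 ∈ ball (0:ℂ) r →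
      z.1.re + P z.2 + f z.2 z.1.im = 0 →
      (h₁ z * wDeriv (fun w => w.re + P z.2 + f z.2 w.im) z.1
        + h₂ z * wDeriv (fun w => z.1.re + P w + f w z.1.im) z.2).re = 0)
    :
    ∃ t : ℝ, 0 < t ∧ (∀ z₂ ∈ ball (0:ℂ) t, h₁ (0, z₂) = 0) ∧
      ∃ β : ℝ, β ≠ 0 ∧
        (fun z₂ : ℂ => h₂ (0, z₂) - Complex.I * (β:ℂ) * z₂) =O[nhds (0:ℂ)]
          fun z₂ => ‖z₂‖ ^ 2 := by
  have hM : IsFlatHypersurface P f := .of_ball hr (hPsm.of_le ENat.LEInfty.out) hPpos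
    (fun n => (hPflat n).isBigO.mono nhdsWithin_le_nhds) hfan.contDiffOn_of_completeSpace hf0
  have hH : IsTangentField P f fun q => (h₁ q, h₂ q) := .of_ball hr hs htang
  obtain ⟨q, hq, hhq⟩ := hne
  obtain ⟨hfst, β, hβ, hsnd⟩ := stmt_15_general hM hH (hh₁.prodMk hh₂) (Prod.ext hv₁ hv₂)
    ⟨q, hq, fun h => hhq.elim (· (congrArg Prod.fst h)) (· (congrArg Prod.snd h))⟩
  obtain ⟨t, ht, hball⟩ := eventually_nhds_iff_ball.1 hfst
  exact ⟨t, ht, hball, β, hβ, hsnd⟩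
end
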